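/- arXiv:2010.10040 — 4 statements merged into one kernel-verified Lean document; each statement's English description precedes it below -/
import Mathlib

section
/- Let g be a continuous Riemannian metric on the n-dimensional unit cube [0,1]ⁿ, and let d_i denote the infimum of g-lengths of Lipschitz curves joining the i-th pair of opposite faces. Then the g-volume ∫_{[0,1]ⁿ} √(det g) is at least d_1 · d_2 ⋯ d_n. -/
open MeasureTheory Matrix intervalIntegral

/-- The `g`-length of a curve `γ : ℝ → ℝⁿ` (restricted to `[0,1]`) with respect to a
Riemannian metric `g`, given pointwise by an `n × n` matrix. -/
noncomputable def gLength (n : ℕ) (g : (Fin n → ℝ) → Matrix (Fin n) (Fin n) ℝ)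
    (γ : ℝ → (Fin n → ℝ)) : ℝ :=
  ∫ t in (0:ℝ)..1, Real.sqrt ((deriv γ t) ⬝ᵥ (g (γ t)).mulVec (deriv γ t))

/-- `γ` is a Lipschitz curve in the unit cube `[0,1]ⁿ` joining the `i`-th pair of opposite
faces `{x : x i = 0}` and `{x : x i = 1}`. -/
def JoinsFaces (n : ℕ) (i : Fin n) (γ : ℝ → (Fin n → ℝ)) : Prop :=
  (∃ K : NNReal, LipschitzWith K γ) ∧
  (∀ t ∈ Set.Icc (0:ℝ) 1, γ t ∈ Set.Icc (0 : Fin n → ℝ) 1) ∧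
  γ 0 i = 0 ∧ γ 1 i = 1

theorem Matrix.PosSemidef.det_le_one_of_diag_le_one {ι : Type*} [Fintype ι] [DecidableEq ι]
    {M : Matrix ι ι ℝ} (hM : M.PosSemidef) (hdiag : ∀ i, M i i ≤ 1) : M.det ≤ 1 := by
  have htr : ∑ i, hM.1.eigenvalues i ≤ Fintype.card ι := by
    have h : M.trace = ∑ i, hM.1.eigenvalues i := by
      simpa using hM.1.trace_eq_sum_eigenvalues
    rw [← h]
    calc M.trace ≤ ∑ _i : ι, (1 : ℝ) := Finset.sum_le_sum fun i _ => hdiag i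
      _ = Fintype.card ι := by simp
  have hdet : M.det = ∏ i, hM.1.eigenvalues i := by
    simpa using hM.1.det_eq_prod_eigenvalues
  rw [hdet]
  calc ∏ i, hM.1.eigenvalues i ≤ ∏ i, Real.exp (hM.1.eigenvalues i - 1) :=
        Finset.prod_le_prod (fun i _ => hM.eigenvalues_nonneg i) fun i _ => by
          linarith [Real.add_one_le_exp (hM.1.eigenvalues i - 1)]
    _ = Real.exp (∑ i, (hM.1.eigenvalues i - 1)) := (Real.exp_sum _ _).symm
    _ ≤ 1 := Real.exp_le_one_iff.2 (by simpa using htr)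

/-- If each row of `A`, seen as a linear form, is bounded by the norm attached to the positive
definite matrix `G`, then `|det A| ≤ √(det G)`. -/
theorem Matrix.PosDef.abs_det_le_sqrt_det {ι : Type*} [Fintype ι] [DecidableEq ι]
    {A G : Matrix ι ι ℝ} (hG : G.PosDef)
    (h : ∀ i v, A i ⬝ᵥ v ≤ Real.sqrt (v ⬝ᵥ G *ᵥ v)) : |A.det| ≤ Real.sqrt G.det := by
  have hdetG : 0 < G.det := hG.det_pos
  have hM : (A * G⁻¹ * Aᵀ).PosSemidef := by
    simpa using hG.inv.posSemidef.mul_mul_conjTranspose_same A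
  have hdiag : ∀ i, (A * G⁻¹ * Aᵀ) i i ≤ 1 := by
    intro i
    have hi : (A * G⁻¹ * Aᵀ) i i = A i ⬝ᵥ G⁻¹ *ᵥ A i := by
      rw [Matrix.mul_assoc]
      rfl
    have hGv : G *ᵥ G⁻¹ *ᵥ A i = A i := by
      rw [Matrix.mulVec_mulVec, Matrix.mul_nonsing_inv _ hdetG.ne'.isUnit, Matrix.one_mulVec]
    have hle := h i (G⁻¹ *ᵥ A i)
    rw [hGv, dotProduct_comm (G⁻¹ *ᵥ A i), ← hi] at hle
    have h0 := hM.diag_nonneg (i := i)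
    nlinarith [Real.sq_sqrt h0, Real.sqrt_nonneg ((A * G⁻¹ * Aᵀ) i i)]
  have h1 := hM.det_le_one_of_diag_le_one hdiag
  rw [Matrix.det_mul, Matrix.det_mul, Matrix.det_transpose, Matrix.det_nonsing_inv,
    Ring.inverse_eq_inv'] at h1
  apply Real.abs_le_sqrt
  have h2 : A.det * G.det⁻¹ * A.det = A.det ^ 2 / G.det := by ring
  rwa [h2, div_le_one hdetG] at h1

theorem LipschitzWith.volume_image_eq_zero {ι : Type*} [Fintype ι] {K : NNReal}
    {F : (ι → ℝ) → (ι → ℝ)} (hF : LipschitzWith K F) {s : Set (ι → ℝ)} (hs : volume s = 0) :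
    volume (F '' s) = 0 := by
  rw [← MeasureTheory.hausdorffMeasure_pi_real] at hs ⊢
  have h := hF.hausdorffMeasure_image_le (d := (Fintype.card ι : ℝ)) (by positivity) s
  rw [hs, mul_zero] at h
  exact le_antisymm h zero_le

theorem Matrix.exists_polynomial_eval_eq_det {ι : Type*} [Fintype ι] [DecidableEq ι]
    (A B : Matrix ι ι ℝ) : ∃ p : Polynomial ℝ, p.natDegree ≤ Fintype.card ι ∧
      ∀ t, p.eval t = (A + t • B).det := by
  refine ⟨_, Polynomial.natDegree_det_X_add_C_le B A, fun t => ?_⟩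
  rw [← Polynomial.coe_evalRingHom, RingHom.map_det]
  congr 1
  ext i j
  simp [add_comm, mul_comm t]

theorem ContinuousLinearMap.exists_polynomial_eval_eq_det {ι : Type*} [Fintype ι] [DecidableEq ι]
    (A B : (ι → ℝ) →L[ℝ] (ι → ℝ)) : ∃ p : Polynomial ℝ, p.natDegree ≤ Fintype.card ι ∧
      ∀ t : ℝ, p.eval t = (A + t • B).det := by
  obtain ⟨p, hp, h⟩ := Matrix.exists_polynomial_eval_eq_det
    (LinearMap.toMatrix' A.toLinearMap) (LinearMap.toMatrix' B.toLinearMap)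
  refine ⟨p, hp, fun t => ?_⟩
  rw [h, ContinuousLinearMap.det, ← LinearMap.det_toMatrix']
  simp

/-- Evaluation at `1` of a polynomial of degree at most `m` is an affine combination of its values
at points of `(0, δ]`. -/
theorem exists_nodes_eval_one_eq_sum (m : ℕ) {δ : ℝ} (hδ : 0 < δ) :
    ∃ (v w : Fin (m + 1) → ℝ), (∀ j, 0 < v j ∧ v j ≤ δ) ∧ ∑ j, w j = 1 ∧
      ∀ p : Polynomial ℝ, p.natDegree ≤ m → p.eval 1 = ∑ j, w j * p.eval (v j) := by
  set v : Fin (m + 1) → ℝ := fun j => δ / ((j : ℝ) + 1)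
  have hv : Set.InjOn v (Finset.univ : Finset (Fin (m + 1))) := by
    intro a _ b _ hab
    have ha : (0 : ℝ) < (a : ℝ) + 1 := by positivity
    have hb : (0 : ℝ) < (b : ℝ) + 1 := by positivity
    have : (a : ℝ) = b := by
      simp only [v] at hab
      rw [div_eq_div_iff ha.ne' hb.ne'] at hab
      have := mul_left_cancel₀ hδ.ne' hab
      linarith
    exact Fin.ext (by exact_mod_cast this)
  have key : ∀ p : Polynomial ℝ, p.natDegree ≤ m →
      p.eval 1 = ∑ j, (Lagrange.basis Finset.univ v j).eval 1 * p.eval (v j) := by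
    intro p hp
    have hdeg : p.degree < (Finset.univ : Finset (Fin (m + 1))).card := by
      refine lt_of_le_of_lt Polynomial.degree_le_natDegree ?_
      rw [Finset.card_fin]
      exact_mod_cast Nat.lt_succ_of_le hp
    conv_lhs => rw [Lagrange.eq_interpolate hv hdeg]
    simp [Lagrange.interpolate_apply, Polynomial.eval_finsetSum, mul_comm]
  refine ⟨v, fun j => (Lagrange.basis Finset.univ v j).eval 1, fun j => ⟨by positivity, ?_⟩, ?_,
    key⟩
  · exact div_le_self hδ.le (by simp)
  · simpa using (key 1 (by simp)).symm

/-- Change of variables for a small Lipschitz perturbation of the identity preserving the cube. -/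
theorem integral_abs_det_eq_one_of_lipschitzWith_sub_id {ι : Type*} [Fintype ι]
    {F : (ι → ℝ) → (ι → ℝ)} {c : NNReal} (hc : c < 1) (hF : LipschitzWith c (fun x => F x - x))
    {F' : (ι → ℝ) → ((ι → ℝ) →L[ℝ] (ι → ℝ))} (hF' : ∀ᵐ x, HasFDerivAt F (F' x) x)
    (hcube : ∀ x, F x ∈ Set.Icc (0 : ι → ℝ) 1 ↔ x ∈ Set.Icc (0 : ι → ℝ) 1) :
    ∫ x in Set.Icc (0 : ι → ℝ) 1, |(F' x).det| = 1 := by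
  classical
  have happ : ApproximatesLinearOn F
      ((ContinuousLinearEquiv.refl ℝ (ι → ℝ) : (ι → ℝ) ≃L[ℝ] (ι → ℝ)) :
        (ι → ℝ) →L[ℝ] (ι → ℝ)) Set.univ c := by
    rw [ApproximatesLinearOn.approximatesLinearOn_iff_lipschitzOnWith, lipschitzOnWith_univ]
    exact hF
  have hc' : Subsingleton (ι → ℝ) ∨
      c < ‖((ContinuousLinearEquiv.refl ℝ (ι → ℝ)).symm : (ι → ℝ) →L[ℝ] (ι → ℝ))‖₊⁻¹ := by
    rcases subsingleton_or_nontrivial (ι → ℝ) with h | h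
    · exact Or.inl h
    · right
      have : ‖((ContinuousLinearEquiv.refl ℝ (ι → ℝ)).symm : (ι → ℝ) →L[ℝ] (ι → ℝ))‖₊ = 1 := by
        ext; exact ContinuousLinearMap.norm_id
      rw [this]; simpa using hc
  have hsurj : Function.Surjective F := happ.surjective hc'
  have hinj : Function.Injective F := by
    have := happ.injOn hc'
    rwa [Set.injOn_univ] at this
  have hlip : LipschitzWith (c + 1) F := by
    simpa using hF.add LipschitzWith.id
  obtain ⟨N, hN, hNmeas, hN0⟩ := exists_measurable_superset_of_null hF'
  set s := Set.Icc (0 : ι → ℝ) 1 \ N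
  have hs : MeasurableSet s := measurableSet_Icc.diff hNmeas
  have hsI : s =ᵐ[volume] Set.Icc (0 : ι → ℝ) 1 := sdiff_null_ae_eq_self hN0
  have hder : ∀ x ∈ s, HasFDerivWithinAt F (F' x) s x := fun x hx =>
    (by_contra fun h => hx.2 (hN h) : HasFDerivAt F (F' x) x).hasFDerivWithinAt
  have hcov := MeasureTheory.integral_image_eq_integral_abs_det_fderiv_smul volume hs hder
    hinj.injOn (fun _ => (1 : ℝ))
  have himg : F '' s =ᵐ[volume] Set.Icc (0 : ι → ℝ) 1 := by
    have h1 : F '' s = Set.Icc (0 : ι → ℝ) 1 \ F '' N := by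
      rw [Set.image_sdiff hinj]
      congr 1
      ext y
      constructor
      · rintro ⟨x, hx, rfl⟩
        exact (hcube x).2 hx
      · intro hy
        obtain ⟨x, rfl⟩ := hsurj y
        exact ⟨x, (hcube x).1 hy, rfl⟩
    rw [h1]
    exact sdiff_null_ae_eq_self (hlip.volume_image_eq_zero hN0)
  rw [← setIntegral_congr_set hsI]
  simp only [smul_eq_mul, mul_one] at hcov
  rw [← hcov, setIntegral_congr_set himg]
  simp [Measure.real, Real.volume_Icc_pi]

/-- A Lipschitz self-map of the cube which, in each coordinate `i`, agrees with the identity on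
and beyond the `i`-th pair of faces, has degree one. -/
theorem integral_det_fderiv_eq_one {ι : Type*} [Fintype ι] {K : NNReal} {H : (ι → ℝ) → (ι → ℝ)}
    (hH : LipschitzWith K H) (hlow : ∀ x i, x i ≤ 0 → H x i = x i)
    (hhigh : ∀ x i, 1 ≤ x i → H x i = x i)
    (hmap : ∀ x ∈ Set.Icc (0 : ι → ℝ) 1, H x ∈ Set.Icc (0 : ι → ℝ) 1) :
    ∫ x in Set.Icc (0 : ι → ℝ) 1, (fderiv ℝ H x).det = 1 := by
  classical
  set D : (ι → ℝ) → ((ι → ℝ) →L[ℝ] (ι → ℝ)) := fun x => fderiv ℝ H x - 1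
  have hu : LipschitzWith (K + 1) (fun x => H x - x) := hH.sub LipschitzWith.id
  have hDnorm : ∀ x, ‖D x‖ ≤ K + 1 := fun x =>
    (norm_sub_le _ _).trans (add_le_add (norm_fderiv_le_of_lipschitz ℝ hH)
      ContinuousLinearMap.norm_id_le)
  have hDmeas : Measurable D := (measurable_fderiv ℝ H).sub measurable_const
  have hdetcont : Continuous fun A : (ι → ℝ) →L[ℝ] (ι → ℝ) => A.det :=
    ContinuousLinearMap.continuous_det
  obtain ⟨ε, hε, hpos⟩ : ∃ ε > 0, ∀ A : (ι → ℝ) →L[ℝ] (ι → ℝ), ‖A‖ < ε → 0 < (1 + A).det := by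
    have h : ∀ᶠ A in nhds (0 : (ι → ℝ) →L[ℝ] (ι → ℝ)), 0 < (1 + A).det := by
      refine (hdetcont.comp (continuous_const.add continuous_id)).continuousAt.eventually_const_lt ?_
      simp [ContinuousLinearMap.det]
    obtain ⟨ε, hε, h⟩ := Metric.eventually_nhds_iff.1 h
    exact ⟨ε, hε, fun A hA => h (by simpa using hA)⟩
  obtain ⟨δ, hδ, hδ1, hδε⟩ : ∃ δ : ℝ, 0 < δ ∧ δ * (K + 1) < 1 ∧ δ * (K + 1) < ε := by
    have hK : (0 : ℝ) < K + 1 := by positivity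
    refine ⟨min 1 ε / 2 / (K + 1), by positivity, ?_, ?_⟩ <;> rw [div_mul_cancel₀ _ hK.ne']
    · linarith [min_le_left 1 ε]
    · linarith [min_le_right 1 ε]
  have hsmall : ∀ t : ℝ, 0 < t → t ≤ δ →
      ∫ x in Set.Icc (0 : ι → ℝ) 1, (1 + t • D x).det = 1 := by
    intro t ht htδ
    have htK : t * (K + 1) ≤ δ * (K + 1) := by gcongr
    have ht1 : t < 1 := by nlinarith [K.coe_nonneg]
    have hdet : ∀ x, (1 + t • D x).det = |(1 + t • D x).det| := fun x => by
      refine (abs_of_pos (hpos _ ?_)).symm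
      rw [norm_smul, Real.norm_of_nonneg ht.le]
      have := mul_le_mul_of_nonneg_left (hDnorm x) ht.le
      linarith
    rw [integral_congr_ae (Filter.Eventually.of_forall hdet)]
    refine integral_abs_det_eq_one_of_lipschitzWith_sub_id (c := NNReal.mk t ht.le * (K + 1))
      (F := fun x => x + t • (H x - x)) ?_ ?_ ?_ ?_
    · rw [← NNReal.coe_lt_coe]
      push_cast
      exact htK.trans_lt hδ1
    · have h : LipschitzWith (NNReal.mk t ht.le * (K + 1)) (fun x => t • (H x - x)) := by
        refine LipschitzWith.of_dist_le_mul fun x y => ?_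
        rw [dist_smul₀, Real.norm_of_nonneg ht.le]
        have := mul_le_mul_of_nonneg_left (hu.dist_le_mul x y) ht.le
        rw [NNReal.coe_mul, mul_assoc, NNReal.coe_mk]
        exact this
      simpa using h
    · filter_upwards [hH.ae_differentiableAt (μ := volume)] with x hx
      exact (hasFDerivAt_id x).add ((hx.hasFDerivAt.sub (hasFDerivAt_id x)).const_smul t)
    · intro x
      refine ⟨fun hx => ⟨fun i => ?_, fun i => ?_⟩, fun hx => ?_⟩
      · by_contra! hi
        have h0 := hx.1 i
        have := hlow x i hi.le
        simp [this] at h0 hi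
        linarith
      · by_contra! hi
        have h0 := hx.2 i
        have := hhigh x i hi.le
        simp [this] at h0 hi
        linarith
      · have h := (convex_Icc (0 : ι → ℝ) 1) hx (hmap x hx) (sub_nonneg.2 ht1.le) ht.le (by ring)
        convert h using 1
        module
  have hint : ∀ t : ℝ, IntegrableOn (fun x => (1 + t • D x).det) (Set.Icc (0 : ι → ℝ) 1) := by
    intro t
    obtain ⟨C, hC⟩ := (isCompact_closedBall (0 : (ι → ℝ) →L[ℝ] (ι → ℝ))
      (K + 1)).exists_bound_of_continuousOn
      (f := fun A : (ι → ℝ) →L[ℝ] (ι → ℝ) => (1 + t • A).det)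
      (hdetcont.comp (continuous_const.add (continuous_const_smul t))).continuousOn
    refine Measure.integrableOn_of_bounded (M := C) (by simp [Real.volume_Icc_pi]) ?_ ?_
    · exact (hdetcont.measurable.comp
        (measurable_const.add (hDmeas.const_smul t))).aestronglyMeasurable
    · exact Filter.Eventually.of_forall fun x => hC _ (by simpa using hDnorm x)
  obtain ⟨v, w, hv, hw, hvw⟩ := exists_nodes_eval_one_eq_sum (Fintype.card ι) hδ
  have hpt : ∀ x, (fderiv ℝ H x).det = ∑ j, w j * (1 + v j • D x).det := by
    intro x
    obtain ⟨p, hp, hpe⟩ := ContinuousLinearMap.exists_polynomial_eval_eq_det 1 (D x)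
    have := hvw p hp
    simp only [hpe] at this
    rw [← this]
    simp [D]
  simp_rw [hpt]
  rw [integral_finsetSum _ fun j _ => (hint (v j)).const_mul (w j)]
  simp_rw [MeasureTheory.integral_const_mul]
  rw [← hw]
  exact Finset.sum_congr rfl fun j _ => by rw [hsmall _ (hv j).1 (hv j).2, mul_one]

/-- The norm of the vector `v` at the point `p` for the metric `g`. -/
noncomputable def metricNorm {n : ℕ} (g : (Fin n → ℝ) → Matrix (Fin n) (Fin n) ℝ)
    (p v : Fin n → ℝ) : ℝ :=
  Real.sqrt (v ⬝ᵥ (g p).mulVec v)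

section metricNorm

variable {n : ℕ} {g : (Fin n → ℝ) → Matrix (Fin n) (Fin n) ℝ}

theorem metricNorm_nonneg (p v : Fin n → ℝ) : 0 ≤ metricNorm g p v := Real.sqrt_nonneg _

theorem metricNorm_smul {c : ℝ} (hc : 0 ≤ c) (p v : Fin n → ℝ) :
    metricNorm g p (c • v) = c * metricNorm g p v := by
  have h : (c • v) ⬝ᵥ (g p).mulVec (c • v) = c ^ 2 * (v ⬝ᵥ (g p).mulVec v) := by
    simp only [Matrix.mulVec_smul, smul_dotProduct, dotProduct_smul, smul_eq_mul]
    ring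
  rw [metricNorm, metricNorm, h, Real.sqrt_mul (sq_nonneg c), Real.sqrt_sq hc]

theorem continuous_metricNorm (hg : Continuous g) (v : Fin n → ℝ) :
    Continuous fun p => metricNorm g p v :=
  (continuous_const.dotProduct (hg.matrix_mulVec continuous_const)).sqrt

theorem exists_metricNorm_le (hg : Continuous g) :
    ∃ C : NNReal, ∀ p ∈ Set.Icc (0 : Fin n → ℝ) 1, ∀ v, metricNorm g p v ≤ C * ‖v‖ := by
  obtain ⟨B, hB⟩ := (isCompact_Icc (a := (0 : Fin n → ℝ)) (b := 1)).exists_bound_of_continuousOn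
    (f := fun p => ∑ i, ∑ j, |g p i j|)
    (continuous_finsetSum _ fun i _ => continuous_finsetSum _ fun j _ =>
      (hg.matrix_elem i j).abs).continuousOn
  refine ⟨NNReal.mk (Real.sqrt B) (Real.sqrt_nonneg _), fun p hp v => ?_⟩
  have hBp : ∑ i, ∑ j, |g p i j| ≤ B := (le_abs_self _).trans (hB p hp)
  have hB0 : 0 ≤ B := (norm_nonneg _).trans (hB p hp)
  refine Real.sqrt_le_iff.2 ⟨by positivity, ?_⟩
  rw [mul_pow, NNReal.coe_mk, Real.sq_sqrt hB0]
  refine le_trans ?_ (mul_le_mul_of_nonneg_right hBp (sq_nonneg ‖v‖))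
  simp only [dotProduct, Matrix.mulVec, Finset.mul_sum, Finset.sum_mul]
  refine Finset.sum_le_sum fun i _ => Finset.sum_le_sum fun j _ => ?_
  have hi : |v i| ≤ ‖v‖ := norm_le_pi_norm v i
  have hj : |v j| ≤ ‖v‖ := norm_le_pi_norm v j
  calc v i * (g p i j * v j) ≤ |v i * (g p i j * v j)| := le_abs_self _
    _ = |g p i j| * (|v i| * |v j|) := by rw [abs_mul, abs_mul]; ring
    _ ≤ |g p i j| * (‖v‖ * ‖v‖) := by gcongr
    _ = |g p i j| * ‖v‖ ^ 2 := by ring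

end metricNorm

/-- `γ`, restricted to `[0, T]`, is a Lipschitz curve in the cube from the face `{x i = 0}` to `x`
whose speed is integrable. -/
structure IsFaceCurve {n : ℕ} (g : (Fin n → ℝ) → Matrix (Fin n) (Fin n) ℝ) (i : Fin n)
    (x : Fin n → ℝ) (T : ℝ) (γ : ℝ → (Fin n → ℝ)) : Prop where
  pos : 0 < T
  lipschitz : ∃ K : NNReal, LipschitzWith K γ
  mem_cube : ∀ t ∈ Set.Icc 0 T, γ t ∈ Set.Icc (0 : Fin n → ℝ) 1
  start : γ 0 i = 0
  finish : γ T = x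
  integrable : IntervalIntegrable (fun t => metricNorm g (γ t) (deriv γ t)) volume 0 T

/-- The distance, inside the cube, from `x` to the face `{x i = 0}`. -/
noncomputable def faceDist {n : ℕ} (g : (Fin n → ℝ) → Matrix (Fin n) (Fin n) ℝ) (i : Fin n)
    (x : Fin n → ℝ) : ℝ :=
  sInf {L | ∃ T γ, IsFaceCurve g i x T γ ∧ L = ∫ t in 0..T, metricNorm g (γ t) (deriv γ t)}

section faceDist

variable {n : ℕ} {g : (Fin n → ℝ) → Matrix (Fin n) (Fin n) ℝ} {i : Fin n} {x y : Fin n → ℝ}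
  {T c : ℝ} {γ : ℝ → (Fin n → ℝ)}

theorem IsFaceCurve.integral_nonneg (h : IsFaceCurve g i x T γ) :
    0 ≤ ∫ t in 0..T, metricNorm g (γ t) (deriv γ t) :=
  intervalIntegral.integral_nonneg h.pos.le fun _ _ => metricNorm_nonneg _ _

theorem IsFaceCurve.faceDist_le (h : IsFaceCurve g i x T γ) :
    faceDist g i x ≤ ∫ t in 0..T, metricNorm g (γ t) (deriv γ t) :=
  csInf_le ⟨0, by rintro _ ⟨T, γ, h, rfl⟩; exact h.integral_nonneg⟩ ⟨T, γ, h, rfl⟩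

theorem faceDist_nonneg : 0 ≤ faceDist g i x :=
  Real.sInf_nonneg (by rintro _ ⟨T, γ, h, rfl⟩; exact h.integral_nonneg)

theorem isFaceCurve_const (hx : x ∈ Set.Icc (0 : Fin n → ℝ) 1) (hxi : x i = 0) :
    IsFaceCurve g i x 1 fun _ => x where
  pos := one_pos
  lipschitz := ⟨0, LipschitzWith.const x⟩
  mem_cube _ _ := hx
  start := hxi
  finish := rfl
  integrable := by simp [metricNorm]

theorem faceDist_eq_zero (hx : x ∈ Set.Icc (0 : Fin n → ℝ) 1) (hxi : x i = 0) :
    faceDist g i x = 0 :=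
  le_antisymm ((isFaceCurve_const hx hxi).faceDist_le.trans (by simp [metricNorm]))
    faceDist_nonneg

/-- Appending a segment to a curve. -/
theorem IsFaceCurve.exists_append_segment (hg : Continuous g) (h : IsFaceCurve g i x T γ)
    (hy : y ∈ Set.Icc (0 : Fin n → ℝ) 1) :
    ∃ γ', IsFaceCurve g i y (T + 1) γ' ∧
      ∫ t in 0..(T + 1), metricNorm g (γ' t) (deriv γ' t) =
        (∫ t in 0..T, metricNorm g (γ t) (deriv γ t)) +
          ∫ s in (0 : ℝ)..1, metricNorm g (x + s • (y - x)) (y - x) := by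
  have hT := h.pos
  have hx : x ∈ Set.Icc (0 : Fin n → ℝ) 1 := h.finish ▸ h.mem_cube T ⟨hT.le, le_rfl⟩
  set γ' : ℝ → (Fin n → ℝ) := fun t => γ (min t T) + max 0 (t - T) • (y - x) with hγ'
  have hleft : ∀ t ≤ T, γ' t = γ t := fun t ht => by
    simp [hγ', min_eq_left ht, max_eq_left (sub_nonpos.2 ht)]
  have hright : ∀ t, T ≤ t → γ' t = x + (t - T) • (y - x) := fun t ht => by
    simp [hγ', min_eq_right ht, max_eq_right (sub_nonneg.2 ht), h.finish]
  have hdleft : ∀ t < T, deriv γ' t = deriv γ t := fun t ht =>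
    Filter.EventuallyEq.deriv_eq
      ((Iio_mem_nhds ht : Set.Iio T ∈ nhds t) |> Filter.mem_of_superset <| fun s hs =>
        hleft s (le_of_lt hs))
  have hdright : ∀ t, T < t → deriv γ' t = y - x := fun t ht => by
    have he : γ' =ᶠ[nhds t] fun s => x + (s - T) • (y - x) :=
      Filter.mem_of_superset (Ioi_mem_nhds ht) fun s hs => hright s (le_of_lt hs)
    rw [he.deriv_eq]
    have := (((hasDerivAt_id t).sub_const T).smul_const (y - x)).const_add x
    simpa using this.deriv
  have hcongr1 : Set.EqOn (fun t => metricNorm g (γ t) (deriv γ t))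
      (fun t => metricNorm g (γ' t) (deriv γ' t)) (Set.Ioo 0 T) := fun t ht => by
    simp only [hleft t ht.2.le, hdleft t ht.2]
  have hcongr2 : Set.EqOn (fun t => metricNorm g (x + (t - T) • (y - x)) (y - x))
      (fun t => metricNorm g (γ' t) (deriv γ' t)) (Set.Ioo T (T + 1)) := fun t ht => by
    simp only [hright t ht.1.le, hdright t ht.1]
  have hint1 : IntervalIntegrable (fun t => metricNorm g (γ' t) (deriv γ' t)) volume 0 T := by
    refine h.integrable.congr_uIoo ?_
    rwa [Set.uIoo_of_le hT.le]
  have hint2 : IntervalIntegrable (fun t => metricNorm g (γ' t) (deriv γ' t)) volume T (T + 1) := by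
    have hcont : Continuous fun t : ℝ => metricNorm g (x + (t - T) • (y - x)) (y - x) :=
      (continuous_metricNorm hg (y - x)).comp (by fun_prop)
    refine (hcont.intervalIntegrable T (T + 1)).congr_uIoo ?_
    rwa [Set.uIoo_of_le (by linarith)]
  refine ⟨γ', ⟨by linarith, ?_, fun t ht => ?_, ?_, ?_, hint1.trans hint2⟩, ?_⟩
  · obtain ⟨K, hK⟩ := h.lipschitz
    refine ⟨_, (hK.comp (LipschitzWith.id.min_const T)).add
      ((ContinuousLinearMap.toSpanSingleton ℝ (y - x)).lipschitz.comp
        ((LipschitzWith.id.sub (LipschitzWith.const T)).const_max 0))⟩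
  · rcases le_total t T with h1 | h1
    · rw [hleft t h1]
      exact h.mem_cube t ⟨ht.1, h1⟩
    · rw [hright t h1]
      exact (convex_Icc (0 : Fin n → ℝ) 1).add_smul_sub_mem hx hy
        ⟨by linarith, by linarith [ht.2]⟩
  · rw [hleft 0 hT.le, h.start]
  · rw [hright _ (by linarith)]
    simp
  · rw [← intervalIntegral.integral_add_adjacent_intervals hint1 hint2]
    congr 1
    · refine (intervalIntegral.integral_congr_uIoo ?_).symm
      rwa [Set.uIoo_of_le hT.le]
    · have := intervalIntegral.integral_comp_sub_right (a := T) (b := T + 1)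
        (fun s => metricNorm g (x + s • (y - x)) (y - x)) T
      rw [sub_self, add_sub_cancel_left] at this
      rw [← this]
      refine (intervalIntegral.integral_congr_uIoo ?_).symm
      rwa [Set.uIoo_of_le (by linarith)]

theorem exists_isFaceCurve (hg : Continuous g) (hx : x ∈ Set.Icc (0 : Fin n → ℝ) 1) :
    ∃ T γ, IsFaceCurve g i x T γ := by
  have h0 : Function.update x i 0 ∈ Set.Icc (0 : Fin n → ℝ) 1 := by
    refine ⟨fun j => ?_, fun j => ?_⟩ <;> rcases eq_or_ne j i with rfl | hj
    · simp
    · simpa [hj] using hx.1 j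
    · simp
    · simpa [hj] using hx.2 j
  obtain ⟨γ, hγ, -⟩ :=
    (isFaceCurve_const (g := g) h0 (Function.update_self i 0 x)).exists_append_segment hg hx
  exact ⟨_, γ, hγ⟩

theorem faceDist_le_add (hg : Continuous g) (hx : x ∈ Set.Icc (0 : Fin n → ℝ) 1)
    (hy : y ∈ Set.Icc (0 : Fin n → ℝ) 1)
    (hc : ∀ s ∈ Set.Icc (0 : ℝ) 1, metricNorm g (x + s • (y - x)) (y - x) ≤ c) :
    faceDist g i y ≤ faceDist g i x + c := by
  rw [← sub_le_iff_le_add]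
  obtain ⟨T, γ, h⟩ := exists_isFaceCurve (i := i) hg hx
  refine le_csInf ⟨_, T, γ, h, rfl⟩ ?_
  rintro _ ⟨T, γ, h, rfl⟩
  obtain ⟨γ', h', hlen⟩ := h.exists_append_segment hg hy
  have hcont : Continuous fun s : ℝ => metricNorm g (x + s • (y - x)) (y - x) :=
    (continuous_metricNorm hg (y - x)).comp (by fun_prop)
  have hseg : ∫ s in (0 : ℝ)..1, metricNorm g (x + s • (y - x)) (y - x) ≤ c := by
    have := intervalIntegral.integral_mono_on (μ := volume) zero_le_one (hcont.intervalIntegrable 0 1)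
      (intervalIntegrable_const (c := c)) hc
    simpa using this
  linarith [h'.faceDist_le]

theorem sInf_gLength_le_faceDist (hg : Continuous g) (hx : x ∈ Set.Icc (0 : Fin n → ℝ) 1)
    (hxi : x i = 1) :
    sInf {L : ℝ | ∃ γ : ℝ → (Fin n → ℝ), JoinsFaces n i γ ∧ L = gLength n g γ} ≤
      faceDist g i x := by
  obtain ⟨T, γ, h⟩ := exists_isFaceCurve (i := i) hg hx
  refine le_csInf ⟨_, T, γ, h, rfl⟩ ?_
  rintro _ ⟨T, γ, h, rfl⟩
  have hT := h.pos
  refine csInf_le ⟨0, ?_⟩ ⟨fun t => γ (T * t), ⟨?_, fun t ht => ?_, ?_, ?_⟩, ?_⟩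
  · rintro _ ⟨γ, -, rfl⟩
    exact intervalIntegral.integral_nonneg zero_le_one fun _ _ => Real.sqrt_nonneg _
  · obtain ⟨K, hK⟩ := h.lipschitz
    exact ⟨_, hK.comp (lipschitzWith_smul T)⟩
  · exact h.mem_cube _ ⟨mul_nonneg hT.le ht.1, mul_le_of_le_one_right hT.le ht.2⟩
  · simpa using h.start
  · simp [h.finish, hxi]
  · have hspeed : ∀ t, Real.sqrt (deriv (fun t => γ (T * t)) t ⬝ᵥ
        (g (γ (T * t))).mulVec (deriv (fun t => γ (T * t)) t)) =
        T * metricNorm g (γ (T * t)) (deriv γ (T * t)) := fun t => by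
      rw [deriv_comp_mul_left, ← metricNorm_smul hT.le]
      rfl
    simp only [gLength, hspeed]
    rw [intervalIntegral.integral_const_mul,
      intervalIntegral.integral_comp_mul_left
        (fun t => metricNorm g (γ t) (deriv γ t)) hT.ne', mul_zero, mul_one, smul_eq_mul,
      mul_inv_cancel_left₀ hT.ne']

end faceDist

section cube

variable {n : ℕ} {g : (Fin n → ℝ) → Matrix (Fin n) (Fin n) ℝ}

/-- If `φ` does not increase along segments by more than their `g`-length, its differential is
bounded by the `g`-norm. -/
theorem HasFDerivAt.apply_le_metricNorm (hg : Continuous g) {φ : (Fin n → ℝ) → ℝ}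
    (hφ : ∀ x ∈ Set.Icc (0 : Fin n → ℝ) 1, ∀ y ∈ Set.Icc (0 : Fin n → ℝ) 1, ∀ c,
      (∀ s ∈ Set.Icc (0 : ℝ) 1, metricNorm g (x + s • (y - x)) (y - x) ≤ c) → φ y ≤ φ x + c)
    {x : Fin n → ℝ} (hx : Set.Icc (0 : Fin n → ℝ) 1 ∈ nhds x) {φ' : (Fin n → ℝ) →L[ℝ] ℝ}
    (hd : HasFDerivAt φ φ' x) (v : Fin n → ℝ) : φ' v ≤ metricNorm g x v := by
  refine le_of_forall_gt_imp_ge_of_dense fun c hc => ?_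
  have hev : ∀ᶠ p in nhds x, p ∈ Set.Icc (0 : Fin n → ℝ) 1 ∧ metricNorm g p v < c :=
    Filter.Eventually.and hx
      ((continuous_metricNorm hg v).continuousAt.eventually_lt_const hc)
  obtain ⟨ε, hε, hball⟩ := Metric.eventually_nhds_iff_ball.1 hev
  have hline : Filter.Tendsto (fun t : ℝ => x + t • v) (nhdsWithin 0 (Set.Ioi 0)) (nhds x) := by
    have : Continuous fun t : ℝ => x + t • v := by fun_prop
    simpa using (this.tendsto 0).mono_left nhdsWithin_le_nhds
  refine le_of_tendsto (hd.hasLineDerivAt v).tendsto_slope_zero_right ?_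
  filter_upwards [self_mem_nhdsWithin, hline (Metric.ball_mem_nhds x hε)] with t ht htball
  have ht : 0 < t := ht
  have hle : φ (x + t • v) ≤ φ x + t * c := by
    refine hφ x (hball x (Metric.mem_ball_self hε)).1 _ (hball _ htball).1 _ fun s hs => ?_
    rw [add_sub_cancel_left, metricNorm_smul ht.le]
    refine mul_le_mul_of_nonneg_left (hball _ ?_).2.le ht.le
    have h := (convex_ball x ε).add_smul_sub_mem (Metric.mem_ball_self hε) htball hs
    rwa [add_sub_cancel_left] at h
  rw [smul_eq_mul, inv_mul_le_iff₀ ht]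
  linarith

theorem lipschitzWith_clamp (ι : Type*) [Fintype ι] :
    LipschitzWith 1 fun (x : ι → ℝ) j => max 0 (min 1 (x j)) := by
  refine LipschitzWith.of_dist_le_mul fun x y => ?_
  rw [NNReal.coe_one, one_mul, dist_pi_le_iff dist_nonneg]
  intro j
  have h := ((LipschitzWith.id.const_min (1 : ℝ)).const_max 0).dist_le_mul (x j) (y j)
  rw [NNReal.coe_one, one_mul] at h
  exact h.trans (dist_le_pi_dist x y j)

/-- The volume bound obtained from functions of `g`-slope at most one, each vanishing on one face
and equal to `d i` on the opposite one. -/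
theorem prod_le_integral_sqrt_det (hg : Continuous g) (hpd : ∀ p, (g p).PosDef) {d : Fin n → ℝ}
    (hd : ∀ i, 0 < d i) {φ : Fin n → (Fin n → ℝ) → ℝ}
    (hφ0 : ∀ i x, 0 ≤ φ i x) (hφd : ∀ i x, φ i x ≤ d i)
    (hlow : ∀ i, ∀ x ∈ Set.Icc (0 : Fin n → ℝ) 1, x i = 0 → φ i x = 0)
    (hhigh : ∀ i, ∀ x ∈ Set.Icc (0 : Fin n → ℝ) 1, x i = 1 → φ i x = d i)
    (hφ : ∀ i, ∀ x ∈ Set.Icc (0 : Fin n → ℝ) 1, ∀ y ∈ Set.Icc (0 : Fin n → ℝ) 1, ∀ c,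
      (∀ s ∈ Set.Icc (0 : ℝ) 1, metricNorm g (x + s • (y - x)) (y - x) ≤ c) →
        φ i y ≤ φ i x + c) :
    ∏ i, d i ≤ ∫ p in Set.Icc (0 : Fin n → ℝ) 1, Real.sqrt (g p).det := by
  set r : (Fin n → ℝ) → (Fin n → ℝ) := fun x j => max 0 (min 1 (x j)) with hr
  have hrmem : ∀ x, r x ∈ Set.Icc (0 : Fin n → ℝ) 1 := fun x =>
    ⟨fun j => le_max_left _ _, fun j => max_le zero_le_one (min_le_left _ _)⟩
  have hrid : ∀ x ∈ Set.Icc (0 : Fin n → ℝ) 1, r x = x := fun x hx => funext fun j => by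
    have h0 : 0 ≤ x j := hx.1 j
    have h1 : x j ≤ 1 := hx.2 j
    simp [hr, h0, h1]
  have hrlip : LipschitzWith 1 r := lipschitzWith_clamp (Fin n)
  set H : (Fin n → ℝ) → (Fin n → ℝ) := fun x i => φ i (r x) / d i + (x i - r x i) with hH
  have hHcube : ∀ x ∈ Set.Icc (0 : Fin n → ℝ) 1, ∀ i, H x i = φ i x / d i := fun x hx i => by
    simp [hH, hrid x hx]
  obtain ⟨C, hC⟩ := exists_metricNorm_le hg
  have hφle : ∀ i x y, φ i (r y) ≤ φ i (r x) + C * dist x y := fun i x y => by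
    refine hφ i _ (hrmem x) _ (hrmem y) _ fun s hs => ?_
    refine (hC _ ((convex_Icc _ _).add_smul_sub_mem (hrmem x) (hrmem y) hs) _).trans ?_
    rw [← dist_eq_norm, dist_comm]
    gcongr
    simpa using hrlip.dist_le_mul x y
  have hφlip : ∀ i, LipschitzWith C fun x => φ i (r x) := fun i =>
    LipschitzWith.of_le_add_mul C fun x y => by rw [dist_comm]; exact hφle i y x
  obtain ⟨K, hK⟩ : ∃ K, LipschitzWith K H := by
    have hi : ∀ i, ∃ K, LipschitzWith K fun x => H x i := fun i => by
      have h := ((lipschitzWith_smul (d i)⁻¹).comp (hφlip i)).add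
        ((LipschitzWith.eval (α := fun _ => ℝ) i).sub
          ((LipschitzWith.eval (α := fun _ => ℝ) i).comp hrlip))
      simp only [hH, div_eq_inv_mul]
      exact ⟨_, h⟩
    choose K hK using hi
    refine ⟨∑ i, K i, LipschitzWith.of_dist_le_mul fun x y => ?_⟩
    rw [dist_pi_le_iff (by positivity)]
    intro i
    refine ((hK i).dist_le_mul x y).trans ?_
    gcongr
    exact Finset.single_le_sum (f := K) (fun _ _ => zero_le) (Finset.mem_univ i)
  have hone : ∫ x in Set.Icc (0 : Fin n → ℝ) 1, (fderiv ℝ H x).det = 1 := by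
    refine integral_det_fderiv_eq_one hK (fun x i hi => ?_) (fun x i hi => ?_) fun x hx => ?_
    · have h : r x i = 0 := by simp [hr, hi.trans zero_le_one, hi]
      simp [hH, hlow i _ (hrmem x) h, h]
    · have h : r x i = 1 := by simp [hr, hi]
      simp [hH, hhigh i _ (hrmem x) h, h, (hd i).ne']
    · refine ⟨fun i => ?_, fun i => ?_⟩ <;> rw [hHcube x hx i]
      · exact div_nonneg (hφ0 i x) (hd i).le
      · exact (div_le_one (hd i)).2 (hφd i x)
  have hint : IntegrableOn (fun x => (fderiv ℝ H x).det) (Set.Icc (0 : Fin n → ℝ) 1) := by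
    by_contra h
    rw [integral_undef h] at hone
    exact zero_ne_one hone
  have hbound : ∀ᵐ x ∂(volume.restrict (Set.Icc (0 : Fin n → ℝ) 1)),
      (∏ i, d i) * (fderiv ℝ H x).det ≤ Real.sqrt (g x).det := by
    rw [← Measure.restrict_congr_set (interior_ae_eq_of_null_frontier
      ((convex_Icc (0 : Fin n → ℝ) 1).addHaar_frontier volume))]
    filter_upwards [ae_restrict_of_ae (hK.ae_differentiableAt (μ := volume)),
      ae_restrict_mem isOpen_interior.measurableSet] with x hdiff hx
    have hnhds : Set.Icc (0 : Fin n → ℝ) 1 ∈ nhds x := mem_interior_iff_mem_nhds.1 hx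
    set A : Matrix (Fin n) (Fin n) ℝ := LinearMap.toMatrix' (fderiv ℝ H x).toLinearMap with hA
    have hdet : (∏ i, d i) * (fderiv ℝ H x).det = (Matrix.diagonal d * A).det := by
      rw [Matrix.det_mul, Matrix.det_diagonal, hA, LinearMap.det_toMatrix']
    rw [hdet]
    refine (le_abs_self _).trans ((hpd x).abs_det_le_sqrt_det fun i v => ?_)
    have hrow : (Matrix.diagonal d * A) i ⬝ᵥ v = d i * fderiv ℝ H x v i := by
      have h1 : A *ᵥ v = fderiv ℝ H x v := LinearMap.toMatrix'_mulVec _ v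
      change ((Matrix.diagonal d * A) *ᵥ v) i = _
      rw [← Matrix.mulVec_mulVec, h1, Matrix.mulVec_diagonal]
    rw [hrow]
    have hder : HasFDerivAt (φ i)
        (d i • (ContinuousLinearMap.proj i).comp (fderiv ℝ H x)) x := by
      have h1 := ((hasFDerivAt_pi'.1 hdiff.hasFDerivAt) i).const_mul (d i)
      refine h1.congr_of_eventuallyEq ?_
      filter_upwards [hnhds] with y hy
      rw [hHcube y hy i, mul_div_cancel₀ _ (hd i).ne']
    exact hder.apply_le_metricNorm hg (hφ i) hnhds v
  calc ∏ i, d i = ∫ x in Set.Icc (0 : Fin n → ℝ) 1, (∏ i, d i) * (fderiv ℝ H x).det := by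
        rw [MeasureTheory.integral_const_mul, hone, mul_one]
    _ ≤ _ := integral_mono_ae (hint.const_mul _)
        (hg.matrix_det.sqrt.continuousOn.integrableOn_compact isCompact_Icc) hbound

end cube

/-- **Besicovitch inequality.** Let `g` be a continuous Riemannian metric on the unit cube
`[0,1]ⁿ`, and let `d i` be the infimum of `g`-lengths of Lipschitz curves joining the `i`-th
pair of opposite faces. Then the `g`-volume `∫_{[0,1]ⁿ} √(det g)` is at least `d 1 ⋯ d n`. -/
theorem besicovitch_inequality
    (n : ℕ) (g : (Fin n → ℝ) → Matrix (Fin n) (Fin n) ℝ)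
    (hg_cont : Continuous g)
    (hg_posdef : ∀ p, (g p).PosDef) :
    (∏ i : Fin n, sInf {L : ℝ | ∃ γ : ℝ → (Fin n → ℝ), JoinsFaces n i γ ∧ L = gLength n g γ})
      ≤ ∫ p in Set.Icc (0 : Fin n → ℝ) 1, Real.sqrt (g p).det := by
  have hd0 : ∀ i : Fin n,
      0 ≤ sInf {L : ℝ | ∃ γ : ℝ → (Fin n → ℝ), JoinsFaces n i γ ∧ L = gLength n g γ} := fun i =>
    Real.sInf_nonneg (by
      rintro _ ⟨γ, -, rfl⟩
      exact intervalIntegral.integral_nonneg zero_le_one fun _ _ => Real.sqrt_nonneg _)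
  set d : Fin n → ℝ := fun i =>
    sInf {L : ℝ | ∃ γ : ℝ → (Fin n → ℝ), JoinsFaces n i γ ∧ L = gLength n g γ}
  by_cases hd : ∀ i, 0 < d i
  · refine prod_le_integral_sqrt_det hg_cont hg_posdef hd (φ := fun i x => min (d i) (faceDist g i x))
      (fun i x => le_min (hd0 i) faceDist_nonneg) (fun i x => min_le_left _ _)
      (fun i x hx hxi => ?_) (fun i x hx hxi => ?_) fun i x hx y hy c hc => ?_
    · simp only [faceDist_eq_zero hx hxi]
      exact min_eq_right (hd0 i)
    · exact min_eq_left (sInf_gLength_le_faceDist hg_cont hx hxi)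
    · have hc0 : 0 ≤ c := (metricNorm_nonneg _ _).trans (hc 0 (by simp))
      have h := faceDist_le_add (i := i) hg_cont hx hy hc
      rw [min_add]
      exact le_min ((min_le_left _ _).trans (by linarith)) ((min_le_right _ _).trans h)
  · push Not at hd
    obtain ⟨i, hi⟩ := hd
    rw [Finset.prod_eq_zero (Finset.mem_univ i) (le_antisymm hi (hd0 i))]
    exact integral_nonneg fun _ => Real.sqrt_nonneg _
end

section
/- Let f : ℝⁿ → ℝ be a 1-Lipschitz function and A ⊆ ℝⁿ a Borel set. Then the n-dimensional Lebesgue measure of A is at least ∫_{ℝ} μ_{n−1}(A ∩ f⁻¹{x}) dx, where μ_{n−1} = (ω_{n−1}/2^{n−1}) · H^{n−1} is the normalized (n−1)-dimensional Hausdorff measure. -/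
open MeasureTheory Set Filter Topology Metric
open scoped Pointwise ENNReal NNReal RealInnerProductSpace

theorem exists_linearIsometryEquiv_apply_eq {F G : Type*} [NormedAddCommGroup F]
    [InnerProductSpace ℝ F] [NormedAddCommGroup G] [InnerProductSpace ℝ G]
    [FiniteDimensional ℝ F] [FiniteDimensional ℝ G]
    (h : Module.finrank ℝ F = Module.finrank ℝ G) {u : F} {v : G} (hu : ‖u‖ = 1) (hv : ‖v‖ = 1) :
    ∃ L : F ≃ₗᵢ[ℝ] G, L u = v := by
  have hpos : 0 < Module.finrank ℝ F := by
    have : Nontrivial F := ⟨u, 0, by rintro rfl; simp at hu⟩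
    exact Module.finrank_pos
  let i : Fin (Module.finrank ℝ F) := ⟨0, hpos⟩
  obtain ⟨b, hb⟩ := Orthonormal.exists_orthonormalBasis_extension_of_card_eq
    (ι := Fin (Module.finrank ℝ F)) (𝕜 := ℝ) (v := fun _ => u) (s := {i}) (by simp)
    ⟨fun _ => hu, fun j k hjk => (hjk (Subsingleton.elim j k)).elim⟩
  obtain ⟨c, hc⟩ := Orthonormal.exists_orthonormalBasis_extension_of_card_eq
    (ι := Fin (Module.finrank ℝ F)) (𝕜 := ℝ) (v := fun _ => v) (s := {i}) (by simp [h])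
    ⟨fun _ => hv, fun j k hjk => (hjk (Subsingleton.elim j k)).elim⟩
  refine ⟨b.equiv c (Equiv.refl _), ?_⟩
  rw [← hb i rfl, ← hc i rfl]
  simp

/-- The orthogonal sum `ℝ ⊕ ℝᵐ` with its Euclidean norm. -/
abbrev LineProd (m : ℕ) : Type := WithLp 2 (ℝ × EuclideanSpace ℝ (Fin m))

/-- The solid cylinder `[-1, 1] × B` over the closed unit ball `B` of `ℝᵐ`. -/
def unitCylinder (m : ℕ) : Set (LineProd m) :=
  WithLp.ofLp ⁻¹' (Icc (-1 : ℝ) 1 ×ˢ closedBall (0 : EuclideanSpace ℝ (Fin m)) 1)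

theorem mem_unitCylinder {m : ℕ} {y : LineProd m} :
    y ∈ unitCylinder m ↔ |y.fst| ≤ 1 ∧ ‖y.snd‖ ≤ 1 := by
  simp [unitCylinder, abs_le]

theorem norm_le_two_of_mem_unitCylinder {m : ℕ} {y : LineProd m} (hy : y ∈ unitCylinder m) :
    ‖y‖ ≤ 2 := by
  obtain ⟨h1, h2⟩ := mem_unitCylinder.1 hy
  have h := WithLp.prod_norm_sq_eq_of_L2 y
  rw [Real.norm_eq_abs] at h
  nlinarith [norm_nonneg y, abs_nonneg y.fst, norm_nonneg y.snd]

theorem mem_unitCylinder_of_norm_le_one {m : ℕ} {y : LineProd m} (hy : ‖y‖ ≤ 1) :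
    y ∈ unitCylinder m := by
  have h := WithLp.prod_norm_sq_eq_of_L2 y
  rw [Real.norm_eq_abs] at h
  rw [mem_unitCylinder]
  constructor <;> nlinarith [norm_nonneg y, abs_nonneg y.fst, norm_nonneg y.snd]

theorem isCompact_unitCylinder (m : ℕ) : IsCompact (unitCylinder m) :=
  isCompact_of_isClosed_isBounded
    ((isClosed_Icc.prod isClosed_closedBall).preimage (WithLp.prod_continuous_ofLp 2 _ _))
    ((isBounded_closedBall (x := (0 : LineProd m)) (r := 2)).subset fun _ hy =>
      mem_closedBall_zero_iff.2 (norm_le_two_of_mem_unitCylinder hy))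

theorem volume_unitCylinder (m : ℕ) : volume (unitCylinder m) =
    2 * volume (closedBall (0 : EuclideanSpace ℝ (Fin m)) 1) := by
  rw [unitCylinder, (WithLp.volume_preserving_ofLp ℝ (EuclideanSpace ℝ (Fin m))).measure_preimage
    (measurableSet_Icc.prod measurableSet_closedBall).nullMeasurableSet, Measure.volume_eq_prod,
    Measure.prod_prod, Real.volume_Icc]
  norm_num

theorem volume_unitCylinder_ne_zero (m : ℕ) : volume (unitCylinder m) ≠ 0 := by
  rw [volume_unitCylinder]
  exact mul_ne_zero two_ne_zero (measure_closedBall_pos _ _ one_pos).ne'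

/-- The image of the unit cylinder under the similarity `y ↦ x + r L y`. -/
def solidCylinder {m : ℕ} (L : LineProd m ≃ₗᵢ[ℝ] EuclideanSpace ℝ (Fin (m + 1)))
    (x : EuclideanSpace ℝ (Fin (m + 1))) (r : ℝ) : Set (EuclideanSpace ℝ (Fin (m + 1))) :=
  (fun y => x + r • L y) '' unitCylinder m

section SolidCylinder

variable {m : ℕ} (L : LineProd m ≃ₗᵢ[ℝ] EuclideanSpace ℝ (Fin (m + 1)))
  (x : EuclideanSpace ℝ (Fin (m + 1))) {r : ℝ}

theorem isClosed_solidCylinder : IsClosed (solidCylinder L x r) :=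
  ((isCompact_unitCylinder m).image (by fun_prop)).isClosed

theorem volume_solidCylinder (hr : 0 ≤ r) : volume (solidCylinder L x r) =
    ENNReal.ofReal (r ^ (m + 1)) * volume (unitCylinder m) := by
  have h : solidCylinder L x r = (fun z => x + z) '' (r • (L '' unitCylinder m)) := by
    rw [← image_smul, image_image, image_image, solidCylinder]
  rw [h, image_add_left, measure_preimage_add, Measure.addHaar_smul, finrank_euclideanSpace_fin,
    abs_of_nonneg (by positivity), L.image_eq_preimage_symm,
    L.symm.measurePreserving.measure_preimage
      (isCompact_unitCylinder m).measurableSet.nullMeasurableSet]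

theorem solidCylinder_subset_closedBall (hr : 0 ≤ r) : solidCylinder L x r ⊆ closedBall x (2 * r) := by
  rintro _ ⟨y, hy, rfl⟩
  rw [mem_closedBall, dist_eq_norm, add_sub_cancel_left, norm_smul, L.norm_map,
    Real.norm_of_nonneg hr]
  nlinarith [norm_le_two_of_mem_unitCylinder hy]

theorem closedBall_subset_solidCylinder (hr : 0 < r) : closedBall x r ⊆ solidCylinder L x r := by
  intro z hz
  refine ⟨L.symm (r⁻¹ • (z - x)), mem_unitCylinder_of_norm_le_one ?_, ?_⟩
  · rw [L.symm.norm_map, norm_smul, norm_inv, Real.norm_of_nonneg hr.le, inv_mul_le_one₀ hr,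
      ← dist_eq_norm]
    exact hz
  · simp [smul_smul, hr.ne']

theorem interior_solidCylinder_nonempty (hr : 0 < r) : (interior (solidCylinder L x r)).Nonempty :=
  ⟨x, mem_interior.2 ⟨ball x r, ball_subset_closedBall.trans (closedBall_subset_solidCylinder L x hr),
    isOpen_ball, mem_ball_self hr⟩⟩

end SolidCylinder
/-- `LevelCover f A m δ B` means that `A` has a countable cover by sets whose intersections with
the level sets of `f` have diameter at most `d i ≤ δ`, and whose images under `f` lie in measurable
sets `G i` with `∑ d i ^ m * |G i| ≤ B`. -/
def LevelCover {X : Type*} [EMetricSpace X] (f : X → ℝ) (A : Set X) (m : ℕ) (δ B : ℝ≥0∞) :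
    Prop :=
  ∃ (ι : Type) (_ : Countable ι) (S : ι → Set X) (G : ι → Set ℝ) (d : ι → ℝ≥0∞),
    A ⊆ ⋃ i, S i ∧ (∀ i, MeasurableSet (G i)) ∧ (∀ i, MapsTo f (S i) (G i)) ∧
    (∀ i t, ediam (S i ∩ f ⁻¹' {t}) ≤ d i) ∧ (∀ i, d i ≤ δ) ∧ ∑' i, d i ^ m * volume (G i) ≤ B

namespace LevelCover

variable {X : Type*} [EMetricSpace X] {f : X → ℝ} {A A' : Set X} {m : ℕ} {δ B B' : ℝ≥0∞}

theorem mono (h : LevelCover f A m δ B) (hA : A' ⊆ A) (hB : B ≤ B') :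
    LevelCover f A' m δ B' := by
  obtain ⟨ι, hι, S, G, d, hS, hG, hf, hd, hδ, hs⟩ := h
  exact ⟨ι, hι, S, G, d, hA.trans hS, hG, hf, hd, hδ, hs.trans hB⟩

theorem union (h : LevelCover f A m δ B) (h' : LevelCover f A' m δ B') :
    LevelCover f (A ∪ A') m δ (B + B') := by
  obtain ⟨ι, hι, S, G, d, hS, hG, hf, hd, hδ, hs⟩ := h
  obtain ⟨ι', hι', S', G', d', hS', hG', hf', hd', hδ', hs'⟩ := h'
  refine ⟨ι ⊕ ι', inferInstance, Sum.elim S S', Sum.elim G G', Sum.elim d d', ?_, ?_, ?_, ?_, ?_,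
    ?_⟩
  · rw [iUnion_sum]
    exact union_subset_union hS hS'
  · rintro (i | i)
    exacts [hG i, hG' i]
  · rintro (i | i)
    exacts [hf i, hf' i]
  · rintro (i | i)
    exacts [hd i, hd' i]
  · rintro (i | i)
    exacts [hδ i, hδ' i]
  · rw [ENNReal.summable.tsum_sum ENNReal.summable]
    exact add_le_add hs hs'

end LevelCover

theorem lintegral_hausdorffMeasure_le_of_levelCover {X : Type*} [EMetricSpace X]
    [MeasurableSpace X] [BorelSpace X] {f : X → ℝ} {A : Set X} {m : ℕ} {B : ℝ≥0∞}
    (h : ∀ δ : ℝ≥0∞, 0 < δ → LevelCover f A m δ (B + δ)) :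
    ∫⁻ t, μH[m] (A ∩ f ⁻¹' {t}) ≤ B := by
  have hpos : ∀ k : ℕ, (0 : ℝ≥0∞) < (k : ℝ≥0∞)⁻¹ := fun k => by simp
  choose ι hι S G d hS hG hf hd hδ hs using fun k : ℕ => h _ (hpos k)
  set g : ℕ → ℝ → ℝ≥0∞ := fun k t => ∑' i, (G k i).indicator (fun _ => d k i ^ m) t with hg
  have hmeas : ∀ k, Measurable (g k) := fun k =>
    Measurable.tsum fun i => measurable_const.indicator (hG k i)
  have hint : ∀ k, ∫⁻ t, g k t ≤ B + (k : ℝ≥0∞)⁻¹ := fun k => by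
    rw [hg, lintegral_tsum fun i => (measurable_const.indicator (hG k i)).aemeasurable]
    simpa only [lintegral_indicator_const (hG k _)] using hs k
  have hle : ∀ t, μH[m] (A ∩ f ⁻¹' {t}) ≤ liminf (fun k => g k t) atTop := fun t => by
    let J : ℕ → Type := fun k => {i : ι k // (S k i ∩ f ⁻¹' {t}).Nonempty}
    refine (Measure.hausdorffMeasure_le_liminf_tsum (ι := J) (m : ℝ) (A ∩ f ⁻¹' {t})
      (fun k : ℕ => (k : ℝ≥0∞)⁻¹) ENNReal.tendsto_inv_nat_nhds_zero
      (fun k i => S k i.1 ∩ f ⁻¹' {t})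
      (Eventually.of_forall fun k i => (hd k i t).trans (hδ k i))
      (Eventually.of_forall fun k z hz => ?_)).trans ?_
    · obtain ⟨i, hi⟩ := mem_iUnion.1 (hS k hz.1)
      exact mem_iUnion.2 ⟨⟨i, z, hi, hz.2⟩, hi, hz.2⟩
    · refine liminf_le_liminf (Eventually.of_forall fun k => ?_)
      calc ∑' i : J k, ediam (S k i.1 ∩ f ⁻¹' {t}) ^ (m : ℝ)
          ≤ ∑' i : J k, (G k i.1).indicator (fun _ => d k i.1 ^ m) t := by
            refine ENNReal.tsum_le_tsum fun i => ?_
            obtain ⟨z, hz, hzt⟩ := i.2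
            have : t ∈ G k i.1 := by simpa [← show f z = t from hzt] using hf k i.1 hz
            rw [indicator_of_mem this, ENNReal.rpow_natCast]
            gcongr
            exact hd k i t
        _ ≤ g k t := ENNReal.tsum_comp_le_tsum_of_injective Subtype.val_injective _
  calc ∫⁻ t, μH[m] (A ∩ f ⁻¹' {t}) ≤ ∫⁻ t, liminf (fun k => g k t) atTop := lintegral_mono hle
    _ ≤ liminf (fun k => ∫⁻ t, g k t) atTop := lintegral_liminf_le hmeas
    _ ≤ liminf (fun k : ℕ => B + (k : ℝ≥0∞)⁻¹) atTop :=
        liminf_le_liminf (Eventually.of_forall hint)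
    _ = B := by
        simpa using (ENNReal.tendsto_inv_nat_nhds_zero.const_add B).liminf_eq

/-- A Lipschitz function has level covers of arbitrarily small total mass on sets that are null for
the Hausdorff measure of one dimension higher. -/
theorem levelCover_of_hausdorffMeasure_eq_zero {X : Type*} [MetricSpace X]
    [MeasurableSpace X] [BorelSpace X] {f : X → ℝ} (hf : LipschitzWith 1 f) {N : Set X} {m : ℕ}
    (hN : μH[(m + 1 : ℕ)] N = 0) {δ : ℝ≥0∞} (hδ : 0 < δ) {B : ℝ≥0∞} (hB : 0 < B) :
    LevelCover f N m δ B := by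
  wlog hδt : δ < ∞ generalizing δ
  · obtain ⟨ι, hι, S, G, d, hS, hG, hf, hd, hδ', hs⟩ := this one_pos ENNReal.one_lt_top
    refine ⟨ι, hι, S, G, d, hS, hG, hf, hd, fun i => ?_, hs⟩
    rw [not_lt_top_iff.1 hδt]
    exact le_top
  rw [Measure.hausdorffMeasure_apply] at hN
  have h0 := (ENNReal.iSup_eq_zero.1 (ENNReal.iSup_eq_zero.1 hN δ) hδ)
  have hB2 : 0 < B / 2 := ENNReal.half_pos hB.ne'
  rw [← h0] at hB2
  simp only [iInf_lt_iff] at hB2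
  obtain ⟨T, hT, hTδ, hsum⟩ := hB2
  have hball : ∀ i, (T i).Nonempty → ∃ c, T i ⊆ closedBall c (ediam (T i)).toReal := fun i hi => by
    obtain ⟨c, hc⟩ := hi
    refine ⟨c, fun z hz => ?_⟩
    rw [mem_closedBall, dist_edist]
    exact ENNReal.toReal_mono ((hTδ i).trans_lt hδt).ne (edist_le_ediam_of_mem hz hc)
  classical
  let G : ℕ → Set ℝ := fun i => if hi : (T i).Nonempty then
    closedBall (f (hball i hi).choose) (ediam (T i)).toReal else ∅
  refine ⟨ℕ, inferInstance, T, G, fun i => ediam (T i), hT, fun i => ?_, fun i z hz => ?_,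
    fun i t => ediam_mono inter_subset_left, hTδ, ?_⟩
  · by_cases hi : (T i).Nonempty
    · simpa [G, hi] using measurableSet_closedBall
    · simp [G, hi]
  · have hi : (T i).Nonempty := ⟨z, hz⟩
    have := (hball i hi).choose_spec hz
    simp only [G, hi, dif_pos]
    exact ((hf.dist_le_mul _ _).trans (by simp)).trans this
  · have hterm : ∀ i, ediam (T i) ^ m * volume (G i) ≤
        2 * ⨆ _ : (T i).Nonempty, ediam (T i) ^ ((m + 1 : ℕ) : ℝ) := fun i => by
      by_cases hi : (T i).Nonempty
      · simp only [G, hi, dif_pos, Real.volume_closedBall, ENNReal.rpow_natCast, iSup_pos]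
        rw [ENNReal.ofReal_mul zero_le_two, ENNReal.ofReal_toReal ((hTδ i).trans_lt hδt).ne,
          pow_succ]
        simp only [ENNReal.ofReal_ofNat]
        exact le_of_eq (by ring)
      · simp [G, hi]
    calc ∑' i, ediam (T i) ^ m * volume (G i)
        ≤ ∑' i, 2 * ⨆ _ : (T i).Nonempty, ediam (T i) ^ ((m + 1 : ℕ) : ℝ) :=
          ENNReal.tsum_le_tsum hterm
      _ ≤ 2 * (B / 2) := by
          rw [ENNReal.tsum_mul_left]
          gcongr
      _ = B := ENNReal.mul_div_cancel two_ne_zero ENNReal.ofNat_ne_top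

theorem exists_unit_apply_eq_norm_mul_inner {E : Type*} [NormedAddCommGroup E] [InnerProductSpace ℝ E]
    [CompleteSpace E] [Nontrivial E] (φ : E →L[ℝ] ℝ) :
    ∃ e : E, ‖e‖ = 1 ∧ ∀ w, φ w = ‖φ‖ * ⟪e, w⟫ := by
  set v := (InnerProductSpace.toDual ℝ E).symm φ with hv
  have hφ : ∀ w, φ w = ⟪v, w⟫ := fun w => by simp [hv]
  have hn : ‖φ‖ = ‖v‖ := by simp [hv]
  rcases eq_or_ne v 0 with h | h
  · obtain ⟨e, he⟩ := exists_norm_eq E zero_le_one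
    exact ⟨e, he, fun w => by simp [hφ, hn, h]⟩
  · refine ⟨‖v‖⁻¹ • v, by simp [norm_smul, h], fun w => ?_⟩
    rw [hφ, hn, real_inner_smul_left, mul_inv_cancel_left₀ (norm_ne_zero_iff.2 h)]

theorem dist_le_of_mem_unitCylinder {m : ℕ} {y z : LineProd m} (hy : y ∈ unitCylinder m)
    (hz : z ∈ unitCylinder m) {η : ℝ} (h : |y.fst - z.fst| ≤ η) : dist y z ≤ 2 + η := by
  have h2 : ‖(y - z).snd‖ ≤ 2 := by
    have := norm_sub_le y.snd z.snd
    rw [WithLp.sub_snd]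
    linarith [(mem_unitCylinder.1 hy).2, (mem_unitCylinder.1 hz).2]
  have h1 : ‖(y - z).fst‖ ≤ η := by simpa using h
  have hsq := WithLp.prod_norm_sq_eq_of_L2 (y - z)
  rw [dist_eq_norm]
  nlinarith [norm_nonneg (y - z), norm_nonneg (y - z).fst, norm_nonneg (y - z).snd]

/-- At a differentiability point `x`, small cylinders with axis along the gradient of `f` have level
sets of diameter at most about that of the base, and image of length at most about the height. -/
theorem exists_adapted_cylinder {m : ℕ} {f : EuclideanSpace ℝ (Fin (m + 1)) → ℝ}
    (hf : LipschitzWith 1 f) {x : EuclideanSpace ℝ (Fin (m + 1))} (hx : DifferentiableAt ℝ f x)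
    {C : ℝ} (hC : 2 ^ (m + 1) < C) :
    ∃ (L : LineProd m ≃ₗᵢ[ℝ] EuclideanSpace ℝ (Fin (m + 1))) (d l : ℝ), 0 ≤ d ∧
      d ^ m * l ≤ C ∧ ∀ᶠ r in 𝓝[>] (0 : ℝ), ∀ y ∈ unitCylinder m,
        |f (x + r • L y) - f x| ≤ r * l / 2 ∧
        ∀ z ∈ unitCylinder m, f (x + r • L y) = f (x + r • L z) → dist y z ≤ d := by
  obtain ⟨e, he, hφ⟩ := exists_unit_apply_eq_norm_mul_inner (fderiv ℝ f x)
  have ha1 : ‖fderiv ℝ f x‖ ≤ 1 := by simpa using norm_fderiv_le_of_lipschitz ℝ hf (x₀ := x)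
  have ha0 : 0 ≤ ‖fderiv ℝ f x‖ := norm_nonneg _
  have hder := hx.hasFDerivAt
  set φ := fderiv ℝ f x
  set a := ‖φ‖
  obtain ⟨L, hL⟩ := exists_linearIsometryEquiv_apply_eq (F := LineProd m)
    (G := EuclideanSpace ℝ (Fin (m + 1))) (u := WithLp.toLp 2 (1, 0)) (v := e)
    (by rw [(WithLp.linearEquiv 2 ℝ _).finrank_eq]; simp [add_comm]) (by simp) he
  have hφL : ∀ y, φ (L y) = a * y.fst := fun y => by
    rw [hφ, ← hL, L.inner_map_map, WithLp.prod_inner_apply]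
    simp
  -- linear approximation on small cylinders
  have happrox : ∀ ε > 0, ∀ᶠ r in 𝓝[>] (0 : ℝ), 0 < r ∧ ∀ y ∈ unitCylinder m,
      |f (x + r • L y) - f x - r * (a * y.fst)| ≤ r * (2 * ε) := fun ε hε => by
    have hlittle := (hasFDerivAt_iff_isLittleO_nhds_zero.1 hder).def hε
    obtain ⟨ρ, hρ, hball⟩ := Metric.eventually_nhds_iff.1 hlittle
    filter_upwards [Ioo_mem_nhdsGT (half_pos hρ)] with r hr
    refine ⟨hr.1, fun y hy => ?_⟩
    have hy2 := norm_le_two_of_mem_unitCylinder hy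
    have hnorm : ‖r • L y‖ = r * ‖y‖ := by
      rw [norm_smul, L.norm_map, Real.norm_of_nonneg hr.1.le]
    have := hball (y := r • L y) (by rw [dist_zero_right, hnorm]; nlinarith [hr.1, hr.2])
    rw [hnorm, map_smul, hφL, smul_eq_mul, Real.norm_eq_abs] at this
    refine this.trans ?_
    nlinarith [mul_le_mul_of_nonneg_left hy2 (mul_pos hε hr.1).le]
  have hfst : ∀ {ε r : ℝ} {y z : LineProd m}, 0 < r →
      |f (x + r • L y) - f x - r * (a * y.fst)| ≤ r * (2 * ε) →
      |f (x + r • L z) - f x - r * (a * z.fst)| ≤ r * (2 * ε) →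
      f (x + r • L y) = f (x + r • L z) → a * |y.fst - z.fst| ≤ 4 * ε := by
    intro ε r y z hr hy hz hyz
    rw [← abs_of_nonneg ha0, ← abs_mul]
    rw [hyz] at hy
    rw [abs_le] at hy hz ⊢
    constructor <;> refine le_of_mul_le_mul_left ?_ hr <;> linarith [hy.1, hy.2, hz.1, hz.2]
  have himage : ∀ {ε r : ℝ} {y : LineProd m}, 0 < r → y ∈ unitCylinder m →
      |f (x + r • L y) - f x - r * (a * y.fst)| ≤ r * (2 * ε) →
      |f (x + r • L y) - f x| ≤ r * (2 * a + 4 * ε) / 2 := by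
    intro ε r y hr hy h
    have h1 := abs_le.1 (mem_unitCylinder.1 hy).1
    have hra : 0 ≤ r * a := by positivity
    rw [abs_le] at h ⊢
    constructor <;> nlinarith [h.1, h.2, h1.1, h1.2]
  have hC0 : 0 < C := lt_trans (by positivity) hC
  rcases ha0.eq_or_lt with h0 | hpos
  · refine ⟨L, 4, 2 * a + 4 * (C / 4 ^ (m + 1)), by norm_num, ?_, ?_⟩
    · rw [← h0]
      exact le_of_eq (by field_simp; ring)
    · filter_upwards [happrox (C / 4 ^ (m + 1)) (by positivity)] with r ⟨hr, h⟩ y hy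
      refine ⟨himage hr hy (h y hy), fun z hz _ => ?_⟩
      linarith [dist_le_norm_add_norm y z, norm_le_two_of_mem_unitCylinder hy,
        norm_le_two_of_mem_unitCylinder hz]
  · have hlim : Tendsto (fun ε : ℝ => (2 + 4 * ε / a) ^ m * (2 * a + 4 * ε)) (𝓝[>] 0)
        (𝓝 ((2 + 4 * 0 / a) ^ m * (2 * a + 4 * 0))) :=
      (Continuous.tendsto (by fun_prop) 0).mono_left nhdsWithin_le_nhds
    have hlt : (2 + 4 * 0 / a) ^ m * (2 * a + 4 * 0) < C := by
      refine lt_of_le_of_lt ?_ hC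
      rw [mul_zero, zero_div, add_zero, add_zero, pow_succ]
      gcongr
      linarith
    obtain ⟨ε, hεC, hε⟩ := ((hlim.eventually_lt_const hlt).and self_mem_nhdsWithin).exists
    have hε : 0 < ε := hε
    refine ⟨L, 2 + 4 * ε / a, 2 * a + 4 * ε, by positivity, hεC.le, ?_⟩
    filter_upwards [happrox ε hε] with r ⟨hr, h⟩ y hy
    refine ⟨himage hr hy (h y hy), fun z hz hyz => dist_le_of_mem_unitCylinder hy hz ?_⟩
    rw [le_div_iff₀ hpos, mul_comm]
    exact hfst hr (h y hy) (h z hz) hyz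

/-- A Vitali covering by adapted cylinders gives level covers with the sharp constant. -/
theorem levelCover_of_volume_lt {m : ℕ} {f : EuclideanSpace ℝ (Fin (m + 1)) → ℝ}
    (hf : LipschitzWith 1 f) {A : Set (EuclideanSpace ℝ (Fin (m + 1)))}
    {C : ℝ} (hC : 2 ^ (m + 1) < C) {V : ℝ≥0∞} (hV : volume A < V) {δ : ℝ≥0∞} (hδ : 0 < δ) :
    LevelCover f A m δ (ENNReal.ofReal C / volume (unitCylinder m) * V + δ) := by
  obtain ⟨U, hAU, hU, hUV⟩ := A.exists_isOpen_lt_of_lt V hV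
  have hK0 := volume_unitCylinder_ne_zero m
  have hKt : volume (unitCylinder m) ≠ ∞ := (isCompact_unitCylinder m).measure_lt_top.ne
  let D : Set (EuclideanSpace ℝ (Fin (m + 1))) := {x | DifferentiableAt ℝ f x}
  choose L d l hd hdl hev using fun x : D => exists_adapted_cylinder hf x.2 hC
  let Q : D × ℝ → Set (EuclideanSpace ℝ (Fin (m + 1))) := fun a => solidCylinder (L a.1) a.1 a.2
  let t : Set (D × ℝ) := {a | 0 < a.2 ∧ Q a ⊆ U ∧ ENNReal.ofReal (a.2 * d a.1) ≤ δ ∧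
    ∀ y ∈ unitCylinder m, |f (a.1 + a.2 • L a.1 y) - f a.1| ≤ a.2 * l a.1 / 2 ∧
      ∀ z ∈ unitCylinder m, f (a.1 + a.2 • L a.1 y) = f (a.1 + a.2 • L a.1 z) →
        dist y z ≤ d a.1}
  have hsmall : ∀ x ∈ A ∩ D, ∀ ε > (0 : ℝ), ∃ a ∈ t, 2 * a.2 ≤ ε ∧ (a.1 : _) = x := by
    rintro x ⟨hxA, hxD⟩ ε hε
    obtain ⟨ρ, hρ, hρU⟩ := Metric.isOpen_iff.1 hU x (hAU hxA)
    have hlim : Tendsto (fun r : ℝ => ENNReal.ofReal (r * d ⟨x, hxD⟩)) (𝓝[>] 0) (𝓝 0) := by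
      have : Tendsto (fun r : ℝ => ENNReal.ofReal (r * d ⟨x, hxD⟩)) (𝓝 0)
          (𝓝 (ENNReal.ofReal (0 * d ⟨x, hxD⟩))) :=
        (ENNReal.continuous_ofReal.comp (continuous_id.mul continuous_const)).tendsto 0
      simpa using this.mono_left nhdsWithin_le_nhds
    obtain ⟨r, ⟨hr, hrδ⟩, hrρ, hrε⟩ := (((hev ⟨x, hxD⟩).and (hlim.eventually_le_const hδ)).and
      (inter_mem (Ioo_mem_nhdsGT (half_pos hρ)) (Ioo_mem_nhdsGT (half_pos hε)))).exists
    refine ⟨(⟨x, hxD⟩, r), ⟨hrρ.1, ?_, hrδ, hr⟩, by linarith [hrε.2], rfl⟩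
    exact (solidCylinder_subset_closedBall _ _ hrρ.1.le).trans
      ((closedBall_subset_ball (by linarith [hrρ.2])).trans hρU)
  let R : ℝ≥0∞ := volume (closedBall (0 : EuclideanSpace ℝ (Fin (m + 1))) 6) /
    volume (unitCylinder m)
  have hR : R ≠ ∞ := ENNReal.div_ne_top measure_closedBall_lt_top.ne hK0
  obtain ⟨u, hut, hu, hdisj, hnull⟩ := Vitali.exists_disjoint_covering_ae volume (A ∩ D) t
    R.toNNReal (fun a => 2 * a.2) (fun a => (a.1 : EuclideanSpace ℝ (Fin (m + 1)))) Q
    (fun a ha => solidCylinder_subset_closedBall _ _ ha.1.le)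
    (fun a ha => by
      rw [ENNReal.coe_toNNReal hR, volume_solidCylinder _ _ ha.1.le,
        show 3 * (2 * a.2) = a.2 * 6 by ring,
        Measure.addHaar_closedBall_mul _ _ ha.1.le (by norm_num), finrank_euclideanSpace_fin,
        mul_left_comm, ENNReal.div_mul_cancel hK0 hKt])
    (fun a ha => interior_solidCylinder_nonempty _ _ ha.1) (fun a _ => isClosed_solidCylinder _ _) hsmall
  have hcover : LevelCover f (⋃ a ∈ u, Q a) m δ
      (ENNReal.ofReal C / volume (unitCylinder m) * V) := by
    refine ⟨u, hu.to_subtype, fun a => Q a, fun a => closedBall (f a.1.1) (a.1.2 * l a.1.1 / 2),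
      fun a => ENNReal.ofReal (a.1.2 * d a.1.1), (biUnion_eq_iUnion u fun a _ => Q a).subset,
      fun a => measurableSet_closedBall, ?_, ?_, fun a => (hut a.2).2.2.1, ?_⟩
    · rintro a _ ⟨y, hy, rfl⟩
      exact ((hut a.2).2.2.2 y hy).1
    · rintro a s
      refine ediam_le ?_
      rintro _ ⟨⟨y, hy, rfl⟩, hys⟩ _ ⟨⟨z, hz, rfl⟩, hzs⟩
      have hr := (hut a.2).1
      have := ((hut a.2).2.2.2 y hy).2 z hz (Eq.trans hys (Eq.symm hzs))
      rw [edist_dist]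
      refine ENNReal.ofReal_le_ofReal ?_
      rw [dist_add_left, dist_smul₀, (L _).dist_map, Real.norm_of_nonneg hr.le]
      gcongr
    · have hterm : ∀ a : u, ENNReal.ofReal (a.1.2 * d a.1.1) ^ m *
          volume (closedBall (f a.1.1) (a.1.2 * l a.1.1 / 2)) ≤
          ENNReal.ofReal C / volume (unitCylinder m) * volume (Q a) := fun a => by
        have hr := (hut a.2).1
        have hd0 := hd a.1.1
        rw [volume_solidCylinder _ _ hr.le, mul_left_comm, ENNReal.div_mul_cancel hK0 hKt,
          Real.volume_closedBall, ← ENNReal.ofReal_pow (by positivity),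
          ← ENNReal.ofReal_mul (by positivity), ← ENNReal.ofReal_mul (by positivity)]
        refine ENNReal.ofReal_le_ofReal ?_
        calc (a.1.2 * d a.1.1) ^ m * (2 * (a.1.2 * l a.1.1 / 2))
            = a.1.2 ^ (m + 1) * (d a.1.1 ^ m * l a.1.1) := by ring
          _ ≤ a.1.2 ^ (m + 1) * C := by
            gcongr
            exact hdl _
      refine (ENNReal.tsum_le_tsum hterm).trans ?_
      rw [ENNReal.tsum_mul_left]
      gcongr
      rw [← measure_biUnion hu hdisj fun a _ => (isClosed_solidCylinder _ _).measurableSet]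
      exact (measure_mono (iUnion₂_subset fun a ha => (hut ha).2.1)).trans hUV.le
  have hrest : volume (A \ ⋃ a ∈ u, Q a) = 0 := by
    refine measure_mono_null (t := Dᶜ ∪ ((A ∩ D) \ ⋃ a ∈ u, Q a)) (fun z hz => ?_)
      (measure_union_null hf.ae_differentiableAt hnull)
    by_cases hzD : z ∈ D
    · exact Or.inr ⟨⟨hz.1, hzD⟩, hz.2⟩
    · exact Or.inl hzD
  have hH : μH[(m + 1 : ℕ)] (A \ ⋃ a ∈ u, Q a) = 0 := by
    have h := isAddHaarMeasure_hausdorffMeasure (E := EuclideanSpace ℝ (Fin (m + 1)))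
    rw [finrank_euclideanSpace_fin] at h
    exact Measure.absolutelyContinuous_isAddHaarMeasure μH[(m + 1 : ℕ)] volume hrest
  refine (hcover.union (levelCover_of_hausdorffMeasure_eq_zero hf hH hδ hδ)).mono ?_ le_rfl
  rw [union_sdiff_self]
  exact subset_union_right

theorem lintegral_hausdorffMeasure_level_le {m : ℕ} {f : EuclideanSpace ℝ (Fin (m + 1)) → ℝ}
    (hf : LipschitzWith 1 f) (A : Set (EuclideanSpace ℝ (Fin (m + 1)))) :
    ∫⁻ t, μH[m] (A ∩ f ⁻¹' {t}) ≤ 2 ^ (m + 1) / volume (unitCylinder m) * volume A := by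
  have hK0 := volume_unitCylinder_ne_zero m
  have hKt : volume (unitCylinder m) ≠ ∞ := (isCompact_unitCylinder m).measure_lt_top.ne
  rcases eq_or_ne (volume A) ∞ with hA | hA
  · rw [hA, ENNReal.mul_top (ENNReal.div_ne_zero.2 ⟨by simp, hKt⟩)]
    exact le_top
  have hbound : ∀ η : ℝ, 0 < η → ∫⁻ t, μH[m] (A ∩ f ⁻¹' {t}) ≤
      ENNReal.ofReal (2 ^ (m + 1) + η) / volume (unitCylinder m) *
        (volume A + ENNReal.ofReal η) := fun η hη =>
    lintegral_hausdorffMeasure_le_of_levelCover fun δ hδ =>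
      levelCover_of_volume_lt hf (by linarith)
        (ENNReal.lt_add_right hA (by simpa using hη)) hδ
  have hlim : Tendsto (fun η : ℝ => ENNReal.ofReal (2 ^ (m + 1) + η) / volume (unitCylinder m) *
        (volume A + ENNReal.ofReal η)) (𝓝[>] 0)
      (𝓝 (ENNReal.ofReal (2 ^ (m + 1) + 0) / volume (unitCylinder m) *
        (volume A + ENNReal.ofReal 0))) := by
    refine Tendsto.mono_left ?_ nhdsWithin_le_nhds
    refine ENNReal.Tendsto.mul (ENNReal.Tendsto.div_const ?_ (Or.inr hK0)) (Or.inr ?_) ?_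
      (Or.inr (ENNReal.div_ne_top ENNReal.ofReal_ne_top hK0))
    · exact (ENNReal.continuous_ofReal.comp (continuous_const.add continuous_id)).tendsto 0
    · simpa using hA
    · exact tendsto_const_nhds.add (ENNReal.continuous_ofReal.tendsto 0)
  have h := ge_of_tendsto hlim (by filter_upwards [self_mem_nhdsWithin] with η hη using hbound η hη)
  rwa [add_zero, ENNReal.ofReal_zero, add_zero, ENNReal.ofReal_pow zero_le_two,
    ENNReal.ofReal_ofNat] at h

/-- **Coarea inequality.** Let `f : ℝⁿ → ℝ` be a `1`-Lipschitz function and `A ⊆ ℝⁿ` a Borel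
set. Then `vol_n A ≥ ∫_ℝ μ_{n-1} (A ∩ f⁻¹{x}) dx`, where
`μ_{n-1} = (ω_{n-1} / 2^{n-1}) · H^{n-1}` is the normalized `(n-1)`-dimensional Hausdorff
measure and `ω_{n-1}` is the volume of the unit ball in `ℝ^{n-1}`. -/
theorem coarea_inequality
    (n : ℕ) (f : EuclideanSpace ℝ (Fin n) → ℝ) (hf : LipschitzWith 1 f)
    (A : Set (EuclideanSpace ℝ (Fin n))) (hA : MeasurableSet A) :
    ∫⁻ x : ℝ,
        (volume (Metric.closedBall (0 : EuclideanSpace ℝ (Fin (n - 1))) 1) / 2 ^ (n - 1))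
          * μH[(n : ℝ) - 1] (A ∩ f ⁻¹' {x})
      ≤ volume A := by
  rcases n with _ | m
  · refine le_of_eq_of_le (lintegral_eq_zero_of_ae_eq_zero ?_) zero_le
    have : ∀ᵐ x : ℝ, x ≠ f 0 := by simp [ae_iff]
    filter_upwards [this] with x hx
    have : A ∩ f ⁻¹' {x} = ∅ := by
      ext z
      simp [Subsingleton.elim z 0, hx.symm]
    simp [this]
  · have hω0 : volume (closedBall (0 : EuclideanSpace ℝ (Fin m)) 1) ≠ 0 :=
      (measure_closedBall_pos _ _ one_pos).ne'
    have hωt : volume (closedBall (0 : EuclideanSpace ℝ (Fin m)) 1) ≠ ∞ :=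
      measure_closedBall_lt_top.ne
    rw [Nat.add_sub_cancel, Nat.cast_add_one, add_sub_cancel_right,
      lintegral_const_mul' _ _ (ENNReal.div_ne_top hωt (by simp))]
    refine (mul_le_mul_right (lintegral_hausdorffMeasure_level_le hf A) _).trans (le_of_eq ?_)
    rw [volume_unitCylinder, ← mul_assoc, pow_succ',
      ENNReal.mul_div_mul_left _ _ two_ne_zero ENNReal.ofNat_ne_top, ← mul_div_assoc,
      ENNReal.div_mul_cancel (by simp) (by simp), ENNReal.div_self hω0 hωt, one_mul]
end

section
/- Suppose X is a compact geodesic metric space such that every closed curve in X can be contracted within its R-neighborhood. Then the macroscopic dimension of X on scale 100·R is at most 1; that is, X admits a finite open cover of multiplicity at most 2 with every member of radius less than 100·R. -/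
open Metric unitInterval

/-- A metric space is geodesic if any two points are joined by a path realizing the
distance. -/
def IsGeodesicSpace (X : Type*) [MetricSpace X] : Prop :=
  ∀ x y : X, ∃ f : ℝ → X, f 0 = x ∧ f (dist x y) = y ∧
    ∀ s ∈ Set.Icc (0:ℝ) (dist x y), ∀ t ∈ Set.Icc (0:ℝ) (dist x y),
      dist (f s) (f t) = |s - t|

/-- A continuous function on the unit interval whose exponential is constant is constant. -/
theorem eq_of_exp_comp_const {h : I → ℂ} (hc : Continuous h) {c : ℂ}
    (he : ∀ t, Complex.exp (h t) = c) (s t : I) : h s = h t := by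
  refine Complex.isCoveringMap_exp.const_of_comp hc (fun a a' ↦ ?_) s t
  simp [he]

/-- A null-homotopy of a closed plane curve avoiding the origin admits a continuous logarithm
which takes the same value at both ends of the initial curve. -/
theorem exists_log_of_nullHomotopy (K : C(I × I, ℂ)) (h0 : ∀ z, K z ≠ 0)
    (hper : ∀ t, K (0, t) = K (1, t)) {c : ℂ} (hconst : ∀ s, K (s, 1) = c) :
    ∃ g : I → ℂ, Continuous g ∧ (∀ s, Complex.exp (g s) = K (s, 0)) ∧ g 0 = g 1 := by
  let proj : C(ℝ × ℝ, I × I) := ⟨fun z ↦ (Set.projIcc 0 1 zero_le_one z.1,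
    Set.projIcc 0 1 zero_le_one z.2), by fun_prop⟩
  obtain ⟨G', ⟨-, hG'⟩, -⟩ := Complex.isCoveringMapOn_exp.existsUnique_continuousMap_lifts
    (K.comp proj) (a₀ := 0) (Complex.exp_log (h0 (proj 0))) (fun a ↦ by simp [h0])
  let G : C(I × I, ℂ) := ⟨fun z ↦ G' (z.1, z.2), by fun_prop⟩
  have hG (z : I × I) : Complex.exp (G z) = K z := by
    simpa [proj, G] using congrFun hG' ((z.1 : ℝ), (z.2 : ℝ))
  refine ⟨fun s ↦ G (s, 0), by fun_prop, fun s ↦ hG _, ?_⟩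
  have h1 : G (0, 1) = G (1, 1) :=
    eq_of_exp_comp_const (h := fun s ↦ G (s, 1)) (c := c) (by fun_prop)
      (fun s ↦ by rw [hG, hconst]) 0 1
  have h2 : G (0, 0) - G (1, 0) = G (0, 1) - G (1, 1) :=
    eq_of_exp_comp_const (h := fun t ↦ G (0, t) - G (1, t)) (c := 1) (by fun_prop)
      (fun t ↦ by rw [Complex.exp_sub, hG, hG, hper, div_self (h0 _)]) 0 1
  rw [h1, sub_self] at h2
  exact sub_eq_zero.mp h2

/-- A continuous real function on a preconnected set cannot leave an open interval without
attaining one of its endpoints. -/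
theorem IsPreconnected.mem_Ioo_of_ne {α : Type*} [TopologicalSpace α] {S : Set α}
    (hS : IsPreconnected S) {θ : α → ℝ} (hθ : ContinuousOn θ S) {a b : α} (ha : a ∈ S)
    (hb : b ∈ S) {c d : ℝ} (hc : ∀ s ∈ S, θ s ≠ c) (hd : ∀ s ∈ S, θ s ≠ d)
    (hac : θ a ∈ Set.Ioo c d) : θ b ∈ Set.Ioo c d := by
  have key := (hS.image θ hθ).ordConnected
  constructor
  · by_contra! h
    obtain ⟨s, hs, hsc⟩ := key.out ⟨b, hb, rfl⟩ ⟨a, ha, rfl⟩ ⟨h, hac.1.le⟩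
    exact hc s hs hsc
  · by_contra! h
    obtain ⟨s, hs, hsc⟩ := key.out ⟨a, ha, rfl⟩ ⟨b, hb, rfl⟩ ⟨hac.2.le, h⟩
    exact hd s hs hsc

/-- An angle with negative cosine can be moved into `(π/2, 3π/2)` by a multiple of `2π`. -/
theorem exists_sub_int_mul_two_pi_mem_Ioo {θ : ℝ} (h : Real.cos θ < 0) :
    ∃ k : ℤ, θ - k * (2 * Real.pi) ∈ Set.Ioo (Real.pi / 2) (3 * Real.pi / 2) := by
  have hpi := Real.pi_pos
  obtain ⟨k, hk, -⟩ := existsUnique_sub_zsmul_mem_Ico Real.two_pi_pos θ (-(Real.pi / 2))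
  rw [zsmul_eq_mul] at hk
  rw [← Real.cos_sub_int_mul_two_pi θ k] at h
  refine ⟨k, ?_, by linarith [hk.2]⟩
  by_contra! h'
  exact h.not_ge (Real.cos_nonneg_of_mem_Icc ⟨hk.1, h'⟩)

/-- A closed curve running from the left half-plane through the complement of the closed first
quadrant, then through the right half-plane, then through the complement of the closed fourth
quadrant winds once around the origin, so it has no continuous periodic argument. -/
theorem ne_of_winding {θ : I → ℝ} (hθ : Continuous θ) {a b : I} (hab : a ≤ b)
    (h0 : Real.cos (θ 0) < 0)
    (h0a : ∀ s ≤ a, Real.cos (θ s) < 0 ∨ Real.sin (θ s) < 0)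
    (hab' : ∀ s, a ≤ s → s ≤ b → 0 < Real.cos (θ s))
    (hb1 : ∀ s, b ≤ s → Real.cos (θ s) < 0 ∨ 0 < Real.sin (θ s)) : θ 0 ≠ θ 1 := by
  obtain ⟨k, hk⟩ := exists_sub_int_mul_two_pi_mem_Ioo h0
  set φ : I → ℝ := fun s ↦ θ s - k * (2 * Real.pi) with hφ
  have hφc : Continuous φ := by fun_prop
  have hcos (s) : Real.cos (θ s) = Real.cos (φ s) := (Real.cos_sub_int_mul_two_pi _ _).symm
  have hsin (s) : Real.sin (θ s) = Real.sin (φ s) := (Real.sin_sub_int_mul_two_pi _ _).symm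
  simp only [hcos, hsin] at h0a hab' hb1
  have hpi := Real.pi_pos
  have hcosa := hab' a le_rfl hab
  have hsina : Real.sin (φ a) < 0 := (h0a a le_rfl).resolve_left hcosa.not_gt
  have hcosb := hab' b hab le_rfl
  have hsinb : 0 < Real.sin (φ b) := (hb1 b le_rfl).resolve_left hcosb.not_gt
  have cos_shift (x : ℝ) : Real.cos x = Real.cos (x - 2 * Real.pi) := (Real.cos_sub_two_pi x).symm
  have sin_shift (x : ℝ) : Real.sin x = Real.sin (x - 2 * Real.pi) := (Real.sin_sub_two_pi x).symm
  have h0a' : φ a ∈ Set.Ioo 0 (2 * Real.pi) := by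
    refine (isPreconnected_Icc (a := 0) (b := a)).mem_Ioo_of_ne hφc.continuousOn
      (a := 0) (by simp) (by simp) ?_ ?_ ⟨by linarith [hk.1], by linarith [hk.2]⟩
    · intro s hs h
      have := h0a s hs.2
      norm_num [h] at this
    · intro s hs h
      have := h0a s hs.2
      norm_num [h] at this
  have ha : φ a ∈ Set.Ioo (3 * Real.pi / 2) (2 * Real.pi) := by
    refine ⟨?_, h0a'.2⟩
    by_contra! h
    rcases le_total (φ a) Real.pi with h' | h'
    · exact hsina.not_ge (Real.sin_nonneg_of_nonneg_of_le_pi h0a'.1.le h')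
    · exact hcosa.not_ge (Real.cos_nonpos_of_pi_div_two_le_of_le (by linarith) (by linarith))
  have hb : φ b ∈ Set.Ioo (3 * Real.pi / 2) (5 * Real.pi / 2) := by
    refine (isPreconnected_Icc (a := a) (b := b)).mem_Ioo_of_ne hφc.continuousOn
      (a := a) (by simp [hab]) (by simp [hab]) ?_ ?_ ⟨ha.1, by linarith [ha.2]⟩
    · intro s hs h
      refine (hab' s hs.1 hs.2).ne' ?_
      rw [h, show 3 * Real.pi / 2 = Real.pi / 2 + Real.pi by ring]
      simp
    · intro s hs h
      refine (hab' s hs.1 hs.2).ne' ?_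
      rw [h, cos_shift, show 5 * Real.pi / 2 - 2 * Real.pi = Real.pi / 2 by ring]
      simp
  have hb' : 2 * Real.pi < φ b := by
    by_contra! h
    refine hsinb.not_ge ?_
    rw [sin_shift]
    exact Real.sin_nonpos_of_nonpos_of_neg_pi_le (by linarith) (by linarith [hb.1])
  have h1' : φ 1 ∈ Set.Ioo (2 * Real.pi) (4 * Real.pi) := by
    refine (isPreconnected_Icc (a := b) (b := 1)).mem_Ioo_of_ne hφc.continuousOn
      (a := b) ⟨le_rfl, b.2.2⟩ ⟨b.2.2, le_rfl⟩ ?_ ?_ ⟨hb', by linarith [hb.2]⟩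
    · intro s hs h
      have := hb1 s hs.1
      norm_num [h] at this
    · intro s hs h
      have := hb1 s hs.1
      rw [cos_shift, sin_shift, h, show 4 * Real.pi - 2 * Real.pi = 2 * Real.pi by ring] at this
      norm_num at this
  intro h
  have h01 : φ 0 = φ 1 := by simp [hφ, h]
  rw [← h01] at h1'
  linarith [h1'.1, hk.2]

/-- In a geodesic space any two points are joined by a path along which the distances to the two
endpoints add up to the distance between the endpoints. -/
theorem IsGeodesicSpace.exists_path {X : Type*} [MetricSpace X] (hgeo : IsGeodesicSpace X)
    (x y : X) : ∃ q : Path x y, ∀ t, dist x (q t) + dist (q t) y = dist x y := by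
  obtain ⟨f, hf0, hf1, hf⟩ := hgeo x y
  have hd : 0 ≤ dist x y := dist_nonneg
  have hmem (t : I) : (t : ℝ) * dist x y ∈ Set.Icc 0 (dist x y) :=
    ⟨mul_nonneg t.2.1 hd, mul_le_of_le_one_left hd t.2.2⟩
  have hfc : ContinuousOn f (Set.Icc 0 (dist x y)) :=
    LipschitzOnWith.continuousOn (K := 1) <| LipschitzOnWith.of_dist_le_mul fun s hs t ht ↦ by
      simp [hf s hs t ht, Real.dist_eq]
  refine ⟨⟨⟨fun t ↦ f (t * dist x y), hfc.comp_continuous (by fun_prop) hmem⟩,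
    by simp [hf0], by simp [hf1]⟩, fun t ↦ ?_⟩
  change dist x (f (t * dist x y)) + dist (f (t * dist x y)) y = dist x y
  have h1 := hf 0 ⟨le_rfl, hd⟩ _ (hmem t)
  have h2 := hf _ (hmem t) _ ⟨hd, le_rfl⟩
  rw [hf0, abs_sub_comm, abs_of_nonneg (by linarith [(hmem t).1])] at h1
  rw [hf1, abs_sub_comm, abs_of_nonneg (by linarith [(hmem t).2])] at h2
  rw [h1, h2]
  ring

/-- Geodesic spaces are locally path-connected. -/
theorem IsGeodesicSpace.locallyPathConnectedSpace {X : Type*} [MetricSpace X]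
    (hgeo : IsGeodesicSpace X) : LocallyPathConnectedSpace X := by
  refine .of_bases (fun x ↦ nhds_basis_ball) fun x r hr ↦ ?_
  refine ⟨x, mem_ball_self hr, fun {y} hy ↦ ?_⟩
  obtain ⟨q, hq⟩ := hgeo.exists_path x y
  refine ⟨q, fun t ↦ ?_⟩
  rw [mem_ball, dist_comm] at hy ⊢
  linarith [hq t, dist_nonneg (x := q t) (y := y)]

/-- If closed curves contract in their `R`-neighborhoods, the endpoints of a path staying in an
annulus of width `w` around `p` are close to each other. -/
theorem dist_lt_of_path_in_annulus {X : Type*} [MetricSpace X]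
    (hgeo : IsGeodesicSpace X) {R : ℝ} (hR : 0 < R)
    (hcontr : ∀ γ : C(unitInterval, X), γ 0 = γ 1 →
      ∃ (H : C(unitInterval × unitInterval, X)) (x₀ : X),
        (∀ s : unitInterval, H (s, 0) = γ s) ∧
        (∀ t : unitInterval, H (0, t) = H (1, t)) ∧
        (∀ s : unitInterval, H (s, 1) = x₀) ∧
        (∀ z : unitInterval × unitInterval, ∃ t : unitInterval, dist (H z) (γ t) < R))
    {p x y : X} {L w : ℝ} (hL : 2 * R ≤ L) (α : Path x y)
    (hα : ∀ t, dist p (α t) ∈ Set.Ioo L (L + w)) : dist x y < 6 * R + 2 * w := by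
  by_contra! hxy
  obtain ⟨u, hu⟩ := hgeo.exists_path p x
  obtain ⟨v, hv⟩ := hgeo.exists_path y p
  have hx := hα 0
  have hy := hα 1
  rw [α.source] at hx
  rw [α.target] at hy
  let F : X → ℂ := fun z ↦ ⟨dist p z - (L - R), dist z x - dist z y⟩
  have hF : Continuous F := by
    have : F = fun z ↦ Complex.equivRealProdCLM.symm
        (dist p z - (L - R), dist z x - dist z y) := rfl
    rw [this]
    fun_prop
  have near_u (t) (z) (hz : dist z (u t) < R) : (F z).re < 0 ∨ (F z).im < 0 := by
    simp only [F]
    by_contra! h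
    have := dist_triangle p (u t) z
    have := dist_triangle z (u t) x
    have := dist_triangle x z y
    rw [dist_comm (u t) z] at *
    rw [dist_comm x z] at *
    linarith [hu t, hx.2, h.1, h.2]
  have near_α (t) (z) (hz : dist z (α t) < R) : 0 < (F z).re := by
    simp only [F]
    have := dist_triangle p z (α t)
    linarith [(hα t).1]
  have near_v (t) (z) (hz : dist z (v t) < R) : (F z).re < 0 ∨ 0 < (F z).im := by
    simp only [F]
    by_contra! h
    have := dist_triangle p (v t) z
    have := dist_triangle z (v t) y
    have := dist_triangle x z y
    rw [dist_comm (v t) z] at *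
    rw [dist_comm x z] at *
    rw [dist_comm p (v t)] at *
    rw [dist_comm (v t) y] at *
    rw [dist_comm p y] at *
    linarith [hv t, hy.2, h.1, h.2]
  let γ : Path p p := u.trans (α.trans v)
  let a : I := ⟨1 / 2, by norm_num, by norm_num⟩
  let b : I := ⟨3 / 4, by norm_num, by norm_num⟩
  have γ_u (s : I) (hs : s ≤ a) : ∃ t, γ s = u t := by
    have hs' : (s : ℝ) ≤ 1 / 2 := hs
    refine ⟨_, (Path.trans_apply _ _ _).trans (dif_pos hs')⟩
  have γ_α (s : I) (has : a ≤ s) (hsb : s ≤ b) : ∃ t, γ s = α t := by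
    have h1 : (1 / 2 : ℝ) ≤ s := has
    have h2 : (s : ℝ) ≤ 3 / 4 := hsb
    rcases h1.eq_or_lt with h | h
    · refine ⟨0, (Path.trans_apply _ _ _).trans ((dif_pos h.ge).trans ?_)⟩
      rw [α.source]
      convert u.target
      simp [← h]
    · have h3 : 2 * (s : ℝ) - 1 ≤ 1 / 2 := by linarith
      exact ⟨_, ((Path.trans_apply _ _ _).trans (dif_neg h.not_ge)).trans
        ((Path.trans_apply _ _ _).trans (dif_pos h3))⟩
  have γ_v (s : I) (hbs : b ≤ s) : ∃ t, γ s = v t := by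
    have h1 : (3 / 4 : ℝ) ≤ s := hbs
    have h2 : ¬ (s : ℝ) ≤ 1 / 2 := by linarith
    rcases h1.eq_or_lt with h | h
    · have h3 : 2 * (s : ℝ) - 1 ≤ 1 / 2 := by linarith
      refine ⟨0, ((Path.trans_apply _ _ _).trans (dif_neg h2)).trans
        ((Path.trans_apply _ _ _).trans ((dif_pos h3).trans ?_))⟩
      rw [v.source]
      convert α.target
      simp only [← h]
      norm_num
    · have h3 : ¬ 2 * (s : ℝ) - 1 ≤ 1 / 2 := by linarith
      exact ⟨_, ((Path.trans_apply _ _ _).trans (dif_neg h2)).trans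
        ((Path.trans_apply _ _ _).trans (dif_neg h3))⟩
  obtain ⟨H, x₀, hH0, hper, hH1, hnear⟩ := hcontr γ.toContinuousMap (by simp)
  obtain ⟨g, hgc, hg, hg01⟩ := exists_log_of_nullHomotopy ⟨fun z ↦ F (H z), by fun_prop⟩
    (fun z h ↦ by
      change F (H z) = 0 at h
      obtain ⟨s, hs⟩ := hnear z
      change dist (H z) (γ s) < R at hs
      rcases le_total s a with hsa | hsa
      · obtain ⟨t, ht⟩ := γ_u s hsa
        simpa [h] using near_u t (H z) (ht ▸ hs)
      rcases le_total s b with hsb | hsb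
      · obtain ⟨t, ht⟩ := γ_α s hsa hsb
        simpa [h] using near_α t (H z) (ht ▸ hs)
      · obtain ⟨t, ht⟩ := γ_v s hsb
        simpa [h] using near_v t (H z) (ht ▸ hs))
    (fun t ↦ congrArg F (hper t)) (c := F x₀) (fun s ↦ congrArg F (hH1 s))
  have hgF (s : I) : Complex.exp (g s) = F (γ s) := (hg s).trans (congrArg F (hH0 s))
  have hre (s : I) : (F (γ s)).re = Real.exp (g s).re * Real.cos (g s).im := by
    rw [← hgF, Complex.exp_re]
  have him (s : I) : (F (γ s)).im = Real.exp (g s).re * Real.sin (g s).im := by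
    rw [← hgF, Complex.exp_im]
  have cos_neg (s : I) : (F (γ s)).re < 0 ↔ Real.cos (g s).im < 0 := by
    rw [hre, ← neg_pos, ← mul_neg, mul_pos_iff_of_pos_left (Real.exp_pos _), neg_pos]
  have cos_pos (s : I) : 0 < (F (γ s)).re ↔ 0 < Real.cos (g s).im := by
    rw [hre, mul_pos_iff_of_pos_left (Real.exp_pos _)]
  have sin_neg (s : I) : (F (γ s)).im < 0 ↔ Real.sin (g s).im < 0 := by
    rw [him, ← neg_pos, ← mul_neg, mul_pos_iff_of_pos_left (Real.exp_pos _), neg_pos]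
  have sin_pos (s : I) : 0 < (F (γ s)).im ↔ 0 < Real.sin (g s).im := by
    rw [him, mul_pos_iff_of_pos_left (Real.exp_pos _)]
  have hp : (F p).re < 0 := by
    simp only [F, dist_self]
    linarith
  refine ne_of_winding (θ := fun s ↦ (g s).im) (a := a) (b := b) (by fun_prop) ?_ ?_ ?_ ?_ ?_
    (congrArg Complex.im hg01)
  · change (1 / 2 : ℝ) ≤ 3 / 4
    norm_num
  · rwa [← cos_neg, γ.source]
  · intro s hs
    obtain ⟨t, ht⟩ := γ_u s hs
    rw [← cos_neg, ← sin_neg]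
    exact near_u t _ (by simpa [ht] using hR)
  · intro s has hsb
    obtain ⟨t, ht⟩ := γ_α s has hsb
    rw [← cos_pos]
    exact near_α t _ (by simpa [ht] using hR)
  · intro s hs
    obtain ⟨t, ht⟩ := γ_v s hs
    rw [← cos_neg, ← sin_pos]
    exact near_v t _ (by simpa [ht] using hR)

/-- **Macroscopic dimension bound.** Let `X` be a compact geodesic metric space such that
every closed curve in `X` can be contracted within its `R`-neighborhood. Then the macroscopic
dimension of `X` on scale `100 R` is at most `1`: there is a finite open cover of `X` of
multiplicity at most `2` with every member of radius less than `100 R`. -/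
theorem macroscopic_dimension_le_one
    {X : Type*} [MetricSpace X] [CompactSpace X] [Nonempty X]
    (hgeo : IsGeodesicSpace X) (R : ℝ) (hR : 0 < R)
    (hcontr : ∀ γ : C(unitInterval, X), γ 0 = γ 1 →
      ∃ (H : C(unitInterval × unitInterval, X)) (x₀ : X),
        (∀ s : unitInterval, H (s, 0) = γ s) ∧
        (∀ t : unitInterval, H (0, t) = H (1, t)) ∧
        (∀ s : unitInterval, H (s, 1) = x₀) ∧
        (∀ z : unitInterval × unitInterval, ∃ t : unitInterval, dist (H z) (γ t) < R)) :
    ∃ (k : ℕ) (V : Fin k → Set X),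
      (∀ i, IsOpen (V i)) ∧ (⋃ i, V i = Set.univ) ∧
      (∀ x : X, Nat.card {i : Fin k // x ∈ V i} ≤ 2) ∧
      (∀ i, ∃ (c : X) (r : ℝ), r < 100 * R ∧ V i ⊆ Metric.ball c r) := by
  have := hgeo.locallyPathConnectedSpace
  obtain ⟨p⟩ := ‹Nonempty X›
  let U : ℤ → Set X := fun k ↦ {z | dist p z ∈ Set.Ioo ((k - 2 / 3) * R) ((k + 2 / 3) * R)}
  have hU (k : ℤ) : IsOpen (U k) := isOpen_Ioo.preimage (continuous_const.dist continuous_id)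
  have mem_U (x : X) : x ∈ U (round (dist p x / R)) := by
    have h := abs_le.mp (abs_sub_round (dist p x / R))
    exact ⟨(lt_div_iff₀ hR).mp (by linarith [h.1]), (div_lt_iff₀ hR).mp (by linarith [h.2])⟩
  have eq_of_mem_U (x : X) (k : ℤ) (hk : x ∈ U k) :
      k = ⌊dist p x / R⌋ ∨ k = ⌊dist p x / R⌋ + 1 := by
    have h1 : (k - 2 / 3 : ℝ) < dist p x / R := (lt_div_iff₀ hR).mpr hk.1
    have h2 : dist p x / R < k + 2 / 3 := (div_lt_iff₀ hR).mpr hk.2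
    have h3 := Int.floor_le (dist p x / R)
    have h4 := Int.lt_floor_add_one (dist p x / R)
    have h5 : (k : ℝ) < (⌊dist p x / R⌋ + 2 : ℤ) := by push_cast; linarith
    have h6 : (⌊dist p x / R⌋ : ℝ) < (k + 1 : ℤ) := by push_cast; linarith
    have h5' := Int.cast_lt.mp h5
    have h6' := Int.cast_lt.mp h6
    omega
  let W : X → Set X := fun x ↦ pathComponentIn (U (round (dist p x / R))) x
  have mem_W (x : X) : x ∈ W x := mem_pathComponentIn_self (mem_U x)
  obtain ⟨T, hT⟩ := CompactSpace.elim_nhds_subcover W fun x ↦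
    ((hU _).pathComponentIn x).mem_nhds (mem_W x)
  classical
  let S : Finset (Set X) := T.image W
  have hS (i : Fin S.card) : ∃ x, W x = S.equivFin.symm i := by
    obtain ⟨x, -, hx⟩ := Finset.mem_image.mp (S.equivFin.symm i).2
    exact ⟨x, hx⟩
  refine ⟨S.card, fun i ↦ S.equivFin.symm i, fun i ↦ ?_, ?_, fun x ↦ ?_, fun i ↦ ?_⟩
  · obtain ⟨x, hx⟩ := hS i
    beta_reduce
    rw [← hx]
    exact (hU _).pathComponentIn x
  · refine Set.eq_univ_of_forall fun x ↦ ?_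
    obtain ⟨y, hy, hxy⟩ := Set.mem_iUnion₂.mp (hT.ge (Set.mem_univ x))
    refine Set.mem_iUnion.mpr ⟨S.equivFin ⟨W y, Finset.mem_image_of_mem W hy⟩, ?_⟩
    simpa using hxy
  · let P : Finset (Set X) := {pathComponentIn (U ⌊dist p x / R⌋) x,
      pathComponentIn (U (⌊dist p x / R⌋ + 1)) x}
    have hP (i : {i : Fin S.card // x ∈ (S.equivFin.symm i : Set X)}) :
        (S.equivFin.symm i.1 : Set X) ∈ P := by
      obtain ⟨y, hy⟩ := hS i.1
      have hx := i.2
      rw [← hy] at hx ⊢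
      have hcongr : pathComponentIn (U (round (dist p y / R))) x = W y := pathComponentIn_congr hx
      rw [← hcongr]
      rcases eq_of_mem_U x _ (pathComponentIn_subset hx) with h | h <;> simp [P, h]
    calc Nat.card {i : Fin S.card // x ∈ (S.equivFin.symm i : Set X)}
        ≤ Nat.card P := Nat.card_le_card_of_injective (fun i ↦ ⟨_, hP i⟩) fun i j hij ↦ by
          simpa [Subtype.ext_iff] using hij
      _ ≤ 2 := by
          rw [Nat.card_eq_fintype_card, Fintype.card_coe]
          exact Finset.card_le_two
  · obtain ⟨x, hx⟩ := hS i
    beta_reduce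
    rw [← hx]
    set k : ℤ := round (dist p x / R)
    by_cases hL : 2 * R ≤ (k - 2 / 3) * R
    · refine ⟨x, 10 * R, by linarith, fun y hy ↦ ?_⟩
      obtain ⟨α, hα⟩ : JoinedIn (U k) x y := hy
      have := dist_lt_of_path_in_annulus hgeo hR hcontr hL α (w := 4 / 3 * R) fun t ↦
        ⟨(hα t).1, by linarith [(hα t).2]⟩
      rw [mem_ball, dist_comm]
      linarith
    · refine ⟨p, 10 * R, by linarith, fun y hy ↦ ?_⟩
      have hy' : y ∈ U k := pathComponentIn_subset hy
      rw [mem_ball, dist_comm]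
      linarith [hy'.2]
end

section
/- Suppose two embedded n-dimensional disks Δ₁ and Δ₂ in a metric space X have identical boundaries (they agree on ∂Dⁿ as embeddings). If X is contractible and the (n+1)-dimensional Hausdorff measure of X vanishes, then Δ₁ = Δ₂ as subsets of X. -/
open MeasureTheory Metric

open Polynomial in
/-- If the integral of a family of polynomials of bounded degree is constant on an interval
`(0, τ)`, then it takes the same value at `1`. -/
theorem integral_eval_one_eq_of_forall_small {α : Type*} [MeasurableSpace α] {μ : Measure α}
    {P : α → ℝ[X]} {m : ℕ} (hP : ∀ x, (P x).natDegree ≤ m) {τ c : ℝ} (hτ : 0 < τ)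
    (hint : ∀ t ∈ Set.Ioo 0 τ, Integrable (fun x => (P x).eval t) μ)
    (hc : ∀ t ∈ Set.Ioo 0 τ, ∫ x, (P x).eval t ∂μ = c) :
    ∫ x, (P x).eval 1 ∂μ = c := by
  let v : ℕ → ℝ := fun k => τ / (k + 2)
  have hv : ∀ k, v k ∈ Set.Ioo 0 τ := fun k => by
    have hk : (0 : ℝ) ≤ k := Nat.cast_nonneg k
    refine ⟨by positivity, ?_⟩
    rw [div_lt_iff₀ (by positivity)]
    nlinarith
  have hinj : Set.InjOn v (Finset.range (m + 1)) := by
    intro i _ j _ hij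
    have hi : (0 : ℝ) < i + 2 := by positivity
    have hj : (0 : ℝ) < j + 2 := by positivity
    have := (div_eq_div_iff hi.ne' hj.ne').1 hij
    have := mul_left_cancel₀ hτ.ne' this
    exact_mod_cast (add_right_cancel this).symm
  have hsum : ∀ x, (P x).eval 1 =
      ∑ k ∈ Finset.range (m + 1),
        (P x).eval (v k) * (Lagrange.basis (Finset.range (m + 1)) v k).eval 1 := fun x => by
    have hdeg : (P x).degree < (Finset.range (m + 1)).card := by
      rw [Finset.card_range]
      exact lt_of_le_of_lt degree_le_natDegree (by exact_mod_cast Nat.lt_succ_of_le (hP x))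
    conv_lhs => rw [Lagrange.eq_interpolate hinj hdeg]
    simp [Lagrange.interpolate_apply, eval_finsetSum]
  simp_rw [hsum]
  rw [integral_finsetSum _ fun k _ => (hint _ (hv k)).mul_const _]
  simp_rw [integral_mul_const, hc _ (hv _), ← Finset.mul_sum]
  rw [← eval_finsetSum, Lagrange.sum_basis hinj (by simp)]
  simp

/-- The Jacobian matrix of a `C¹` map is continuous. -/
theorem ContDiff.continuous_toMatrix'_fderiv {d : ℕ} {g : (Fin d → ℝ) → (Fin d → ℝ)}
    (hg : ContDiff ℝ 1 g) :
    Continuous fun x =>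
      LinearMap.toMatrix' (fderiv ℝ g x : (Fin d → ℝ) →ₗ[ℝ] (Fin d → ℝ)) := by
  refine continuous_matrix fun i j => ?_
  simp only [LinearMap.toMatrix'_apply]
  exact (continuous_apply i).comp ((hg.continuous_fderiv (by simp)).clm_apply continuous_const)

/-- Change of variables for a small `C¹` perturbation of the identity supported in a ball. -/
theorem exists_forall_setIntegral_comp_id_add_smul_mul_det {d : ℕ}
    {g : (Fin d → ℝ) → (Fin d → ℝ)} (hg : ContDiff ℝ 1 g) {R : ℝ}
    (hR : ∀ x, x ∉ closedBall (0 : Fin d → ℝ) R → g x = 0) :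
    ∃ τ : ℝ, 0 < τ ∧ ∀ t ∈ Set.Ioo 0 τ, ∀ φ : (Fin d → ℝ) → ℝ,
      ∫ x in closedBall (0 : Fin d → ℝ) R, φ (x + t • g x) *
        (1 + t • LinearMap.toMatrix' (fderiv ℝ g x : (Fin d → ℝ) →ₗ[ℝ] (Fin d → ℝ))).det =
      ∫ x in closedBall (0 : Fin d → ℝ) R, φ x := by
  set B := closedBall (0 : Fin d → ℝ) R with hB
  have hBc : IsCompact B := isCompact_closedBall _ _
  have hsupp : HasCompactSupport g := .intro hBc fun x hx => hR x hx
  obtain ⟨L, hL⟩ := ContDiff.lipschitzWith_of_hasCompactSupport hsupp hg (by simp)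
  let A : (Fin d → ℝ) → Matrix (Fin d) (Fin d) ℝ := fun x =>
    LinearMap.toMatrix' (fderiv ℝ g x : (Fin d → ℝ) →ₗ[ℝ] (Fin d → ℝ))
  have hA : Continuous A := hg.continuous_toMatrix'_fderiv
  have hdet : ∀ᶠ t : ℝ in nhds 0, ∀ x ∈ B, 0 < (1 + t • A x).det := by
    refine hBc.eventually_forall_of_forall_eventually fun x _ => ?_
    have hcont : Continuous fun z : ℝ × (Fin d → ℝ) => (1 + z.1 • A z.2).det :=
      (continuous_const.add (continuous_fst.smul (hA.comp continuous_snd))).matrix_det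
    exact hcont.continuousAt.eventually (lt_mem_nhds (by simp))
  obtain ⟨ρ, hρ, hρdet⟩ := Metric.eventually_nhds_iff.1 hdet
  refine ⟨min ρ (1 / (L + 1)), by positivity, fun t ht φ => ?_⟩
  have ht0 : 0 < t := ht.1
  have htL : t * L < 1 := by
    have := ht.2.trans_le (min_le_right _ _)
    rw [lt_div_iff₀ (by positivity)] at this
    nlinarith
  have hlip : ∀ x y, ‖t • g x - t • g y‖ ≤ (t * L) * ‖x - y‖ := fun x y => by
    rw [← smul_sub, norm_smul, Real.norm_of_nonneg ht0.le, mul_assoc]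
    exact mul_le_mul_of_nonneg_left (hL.norm_sub_le x y) ht0.le
  have hinj : Function.Injective fun x => x + t • g x := fun x y hxy => by
    by_contra hne
    have hpos : 0 < ‖x - y‖ := norm_pos_iff.2 (sub_ne_zero.2 hne)
    have hxy' : x - y = -(t • g x - t • g y) := by
      have : x + t • g x = y + t • g y := hxy
      linear_combination this
    have := hlip x y
    rw [← norm_neg, ← hxy'] at this
    nlinarith
  have hsurj : Function.Surjective fun x => x + t • g x := fun y => by
    have hK : ContractingWith (⟨t, ht0.le⟩ * L) fun x => y - t • g x := by
      refine ⟨by exact_mod_cast htL, LipschitzWith.of_dist_le_mul fun a b => ?_⟩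
      rw [dist_eq_norm, dist_eq_norm, sub_sub_sub_cancel_left, norm_sub_rev]
      exact hlip a b
    refine ⟨hK.fixedPoint, ?_⟩
    have : y - t • g hK.fixedPoint = hK.fixedPoint := hK.fixedPoint_isFixedPt
    exact (sub_eq_iff_eq_add.1 this).symm
  have himage : (fun x => x + t • g x) '' B = B := by
    have hfix : ∀ x, x ∉ B → x + t • g x = x := fun x hx => by simp [hR x hx]
    ext y
    constructor
    · rintro ⟨x, hx, rfl⟩
      by_contra hy
      exact hy (by rwa [hinj (hfix _ hy)])
    · intro hy
      obtain ⟨x, rfl⟩ := hsurj y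
      refine ⟨x, ?_, rfl⟩
      by_contra hx
      exact hx (by simpa only [hfix x hx] using hy)
  have hderiv : ∀ x ∈ B, HasFDerivWithinAt (fun x => x + t • g x)
      (ContinuousLinearMap.id ℝ _ + t • fderiv ℝ g x) B x := fun x _ =>
    ((hasFDerivAt_id x).add
      (((hg.differentiable (by simp)) x).hasFDerivAt.const_smul t)).hasFDerivWithinAt
  have key := integral_image_eq_integral_abs_det_fderiv_smul volume
    measurableSet_closedBall hderiv hinj.injOn φ
  rw [himage] at key
  rw [key]
  refine setIntegral_congr_fun measurableSet_closedBall fun x hx => ?_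
  have hpos : 0 < (1 + t • A x).det :=
    hρdet (by simpa [abs_of_pos ht0] using ht.2.trans_le (min_le_left _ _)) x hx
  have heq : (ContinuousLinearMap.id ℝ _ + t • fderiv ℝ g x).det = (1 + t • A x).det := by
    rw [ContinuousLinearMap.det, ← LinearMap.det_toMatrix']
    congr 1
    simp [A]
  simp only [heq, abs_of_pos hpos, smul_eq_mul]
  exact mul_comm _ _

open Polynomial in
/-- The degree formula `∫ φ(f) det Df = ∫ φ` for `f = id + g` with `g` a `C¹` map supported in a
ball, tested on the polynomials `φ y = (1 - |y - q|² / M) ^ k`. -/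
theorem setIntegral_pow_comp_id_add_mul_det {d : ℕ}
    {g : (Fin d → ℝ) → (Fin d → ℝ)} (hg : ContDiff ℝ 1 g) {R : ℝ}
    (hR : ∀ x, x ∉ closedBall (0 : Fin d → ℝ) R → g x = 0) (q : Fin d → ℝ) (M : ℝ) (k : ℕ) :
    ∫ x in closedBall (0 : Fin d → ℝ) R, (1 - M⁻¹ * ∑ i, ((x + g x) i - q i) ^ 2) ^ k *
        (1 + LinearMap.toMatrix' (fderiv ℝ g x : (Fin d → ℝ) →ₗ[ℝ] (Fin d → ℝ))).det =
      ∫ x in closedBall (0 : Fin d → ℝ) R, (1 - M⁻¹ * ∑ i, (x i - q i) ^ 2) ^ k := by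
  obtain ⟨τ, hτ, hsmall⟩ := exists_forall_setIntegral_comp_id_add_smul_mul_det hg hR
  let A : (Fin d → ℝ) → Matrix (Fin d) (Fin d) ℝ := fun x =>
    LinearMap.toMatrix' (fderiv ℝ g x : (Fin d → ℝ) →ₗ[ℝ] (Fin d → ℝ))
  have hA : Continuous A := hg.continuous_toMatrix'_fderiv
  let P : (Fin d → ℝ) → ℝ[X] := fun x =>
    (1 - C M⁻¹ * ∑ i, (C (g x i) * X + C (x i - q i)) ^ 2) ^ k *
      ((X : ℝ[X]) • (A x).map C + (1 : Matrix (Fin d) (Fin d) ℝ).map C).det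
  have hPdeg : ∀ x, (P x).natDegree ≤ k * 2 + d := fun x => by
    refine natDegree_mul_le_of_le (natDegree_pow_le_of_le k ?_) ?_
    · refine (natDegree_sub_le _ _).trans (max_le (by simp) ((natDegree_C_mul_le _ _).trans ?_))
      refine natDegree_sum_le_of_forall_le _ _ fun i _ => ?_
      exact natDegree_pow_le_of_le 2 natDegree_linear_le
    · simpa using natDegree_det_X_add_C_le (A x) 1
  have hPeval : ∀ x t, (P x).eval t =
      (1 - M⁻¹ * ∑ i, ((x + t • g x) i - q i) ^ 2) ^ k * (1 + t • A x).det := fun x t => by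
    have hdet : (((X : ℝ[X]) • (A x).map C + (1 : Matrix (Fin d) (Fin d) ℝ).map C).det).eval t =
        (1 + t • A x).det := by
      rw [← coe_evalRingHom, RingHom.map_det]
      congr 1
      ext i j
      simp [Matrix.one_apply, apply_ite, add_comm]
      exact mul_comm _ _
    simp only [P, eval_mul, hdet, eval_pow, eval_sub, eval_one, eval_C, eval_finsetSum,
      eval_add, eval_X, Pi.add_apply, Pi.smul_apply, smul_eq_mul]
    congr 5 with i
    ring
  have hgc := hg.continuous
  have hcont : ∀ t : ℝ, Continuous fun x => (P x).eval t := fun t => by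
    simp_rw [hPeval]
    refine Continuous.mul (by fun_prop) ?_
    exact (continuous_const.add (hA.const_smul t)).matrix_det
  have := integral_eval_one_eq_of_forall_small (μ := volume.restrict (closedBall 0 R)) hPdeg hτ
    (fun t _ => (hcont t).continuousOn.integrableOn_compact (isCompact_closedBall _ _))
    (fun t ht => by
      simp_rw [hPeval]
      exact hsmall t ht fun y => (1 - M⁻¹ * ∑ i, (y i - q i) ^ 2) ^ k)
  simpa only [hPeval, one_smul] using this

/-- A `C¹` map which agrees with the identity outside a compact set is surjective. -/
theorem surjective_id_add_of_contDiff_of_hasCompactSupport {d : ℕ}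
    {g : (Fin d → ℝ) → (Fin d → ℝ)} (hg : ContDiff ℝ 1 g) (hsupp : HasCompactSupport g) :
    Function.Surjective fun x => x + g x := by
  intro q
  by_contra! hq
  obtain ⟨R₀, hR₀⟩ := hsupp.isCompact.isBounded.subset_closedBall (0 : Fin d → ℝ)
  set R := max R₀ (‖q‖ + 1)
  have hR : ∀ x, x ∉ closedBall (0 : Fin d → ℝ) R → g x = 0 := fun x hx =>
    image_eq_zero_of_notMem_tsupport fun h =>
      hx (closedBall_subset_closedBall (le_max_left _ _) (hR₀ h))
  set B := closedBall (0 : Fin d → ℝ) R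
  have hBc : IsCompact B := isCompact_closedBall _ _
  have hqB : ball q 1 ⊆ B := fun x hx => by
    rw [mem_closedBall_zero_iff]
    have h1 : ‖x‖ ≤ ‖x - q‖ + ‖q‖ := by simpa using norm_add_le (x - q) q
    have h2 : ‖x - q‖ < 1 := mem_ball_iff_norm.1 hx
    exact le_trans (by linarith) (le_max_right R₀ (‖q‖ + 1))
  let N : (Fin d → ℝ) → ℝ := fun y => ∑ i, (y i - q i) ^ 2
  have hN : Continuous N := by fun_prop
  have hN0 : ∀ y, 0 ≤ N y := fun y => Finset.sum_nonneg fun i _ => sq_nonneg _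
  have hNpos : ∀ y, y ≠ q → 0 < N y := fun y hy => by
    refine (hN0 y).lt_of_ne fun h => hy ?_
    have := (Finset.sum_eq_zero_iff_of_nonneg fun i _ => sq_nonneg (y i - q i)).1 h.symm
    ext i
    exact sub_eq_zero.1 (pow_eq_zero_iff two_ne_zero |>.1 (this i (Finset.mem_univ i)))
  have hgc := hg.continuous
  have hNf : Continuous fun x => N (x + g x) := hN.comp (continuous_id.add hgc)
  have hBne : B.Nonempty := ⟨q, hqB (mem_ball_self one_pos)⟩
  obtain ⟨x₀, -, hx₀⟩ := hBc.exists_isMinOn hBne hNf.continuousOn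
  set δ := N (x₀ + g x₀)
  have hδ : 0 < δ := hNpos _ (hq x₀)
  obtain ⟨M₁, hM₁⟩ := hBc.bddAbove_image hNf.continuousOn
  obtain ⟨M₂, hM₂⟩ := hBc.bddAbove_image hN.continuousOn
  set M := max (max M₁ M₂) δ
  have hMpos : 0 < M := hδ.trans_le (le_max_right _ _)
  have hMf : ∀ x ∈ B, N (x + g x) ≤ M := fun x hx =>
    (hM₁ ⟨x, hx, rfl⟩).trans ((le_max_left _ _).trans (le_max_left _ _))
  have hMB : ∀ x ∈ B, N x ≤ M := fun x hx =>
    (hM₂ ⟨x, hx, rfl⟩).trans ((le_max_right _ _).trans (le_max_left _ _))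
  have hle1 : ∀ s, s ≤ M → 0 ≤ 1 - M⁻¹ * s := fun s hs => by
    rw [sub_nonneg, inv_mul_le_iff₀ hMpos]
    simpa using hs
  set a := 1 - M⁻¹ * δ
  set b := 1 - M⁻¹ * (δ / 2)
  have ha : 0 ≤ a := hle1 _ (le_max_right _ _)
  have hab : a < b := by
    have : M⁻¹ * (δ / 2) < M⁻¹ * δ := mul_lt_mul_of_pos_left (by linarith) (inv_pos.2 hMpos)
    simp only [a, b]; linarith
  have hb : 0 < b := ha.trans_lt hab
  let D : (Fin d → ℝ) → ℝ := fun x =>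
    (1 + LinearMap.toMatrix' (fderiv ℝ g x : (Fin d → ℝ) →ₗ[ℝ] (Fin d → ℝ))).det
  have hD : Continuous D := (continuous_const.add hg.continuous_toMatrix'_fderiv).matrix_det
  let U := ball q 1 ∩ {y | N y < δ / 2}
  have hUo : IsOpen U := isOpen_ball.inter (isOpen_lt hN continuous_const)
  have hUne : U.Nonempty := ⟨q, mem_ball_self one_pos, by simp [N, hδ]⟩
  have hUB : U ⊆ B := Set.inter_subset_left.trans hqB
  have hUfin : volume U ≠ ⊤ := (measure_mono hUB).trans_lt hBc.measure_lt_top |>.ne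
  have hUpos : 0 < volume.real U := ENNReal.toReal_pos (hUo.measure_pos _ hUne).ne' hUfin
  have hmain : ∀ k : ℕ, volume.real U * b ^ k ≤ a ^ k * ∫ x in B, |D x| := fun k => by
    have hint : IntegrableOn (fun x => (1 - M⁻¹ * N x) ^ k) B :=
      (by fun_prop : Continuous fun x => (1 - M⁻¹ * N x) ^ k).continuousOn.integrableOn_compact hBc
    calc volume.real U * b ^ k = ∫ _ in U, b ^ k := by simp
      _ ≤ ∫ x in U, (1 - M⁻¹ * N x) ^ k := by
          refine setIntegral_mono_on (integrableOn_const hUfin) (hint.mono_set hUB)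
            hUo.measurableSet fun x hx => pow_le_pow_left₀ hb.le ?_ k
          have : M⁻¹ * N x ≤ M⁻¹ * (δ / 2) :=
            mul_le_mul_of_nonneg_left (le_of_lt hx.2) (inv_pos.2 hMpos).le
          simp only [b]; linarith
      _ ≤ ∫ x in B, (1 - M⁻¹ * N x) ^ k := by
          refine setIntegral_mono_set hint ?_ (Filter.Eventually.of_forall hUB)
          exact (ae_restrict_iff' measurableSet_closedBall).2
            (Filter.Eventually.of_forall fun x hx => pow_nonneg (hle1 _ (hMB x hx)) k)
      _ = ∫ x in B, (1 - M⁻¹ * N (x + g x)) ^ k * D x :=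
          (setIntegral_pow_comp_id_add_mul_det hg hR q M k).symm
      _ ≤ ∫ x in B, a ^ k * |D x| := by
          refine setIntegral_mono_on ?_ ?_ measurableSet_closedBall fun x hx => ?_
          · exact (by fun_prop : Continuous fun x => (1 - M⁻¹ * N (x + g x)) ^ k * D x)
              |>.continuousOn.integrableOn_compact hBc
          · exact (by fun_prop : Continuous fun x => a ^ k * |D x|)
              |>.continuousOn.integrableOn_compact hBc
          · have h0 := hle1 _ (hMf x hx)
            have h1 : M⁻¹ * δ ≤ M⁻¹ * N (x + g x) :=
              mul_le_mul_of_nonneg_left (hx₀ hx) (inv_pos.2 hMpos).le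
            refine (mul_le_mul_of_nonneg_left (le_abs_self _) (pow_nonneg h0 k)).trans ?_
            refine mul_le_mul_of_nonneg_right (pow_le_pow_left₀ h0 ?_ k) (abs_nonneg _)
            simp only [a]; linarith
      _ = a ^ k * ∫ x in B, |D x| := integral_const_mul _ _
  have hlim : Filter.Tendsto (fun k : ℕ => (a / b) ^ k * ∫ x in B, |D x|) Filter.atTop
      (nhds 0) := by
    simpa using (tendsto_pow_atTop_nhds_zero_of_lt_one (div_nonneg ha hb.le)
      ((div_lt_one hb).2 hab)).mul_const (∫ x in B, |D x|)
  refine hUpos.not_ge (ge_of_tendsto' hlim fun k => ?_)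
  rw [div_pow, div_mul_eq_mul_div, le_div_iff₀ (pow_pos hb k)]
  exact hmain k

/-- A continuous map which agrees with the identity outside a compact set is surjective. -/
theorem surjective_id_add_of_continuous_of_hasCompactSupport {d : ℕ}
    {g : (Fin d → ℝ) → (Fin d → ℝ)} (hg : Continuous g) (hsupp : HasCompactSupport g) :
    Function.Surjective fun x => x + g x := by
  intro q
  by_contra! hq
  obtain ⟨g', hg', hdist, hsub⟩ := hg.exists_contDiff_approx 1
    (ε := fun x => dist (x + g x) q) (by fun_prop) fun x => dist_pos.2 (hq x)
  have hsupp' : HasCompactSupport g' := hsupp.mono hsub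
  obtain ⟨x, hx⟩ := surjective_id_add_of_contDiff_of_hasCompactSupport hg' hsupp' q
  have := hdist x
  rw [← hx, dist_add_left, dist_comm] at this
  exact lt_irrefl _ this

/-- **Poincaré–Miranda theorem** on the cube `[-1, 1]ᵈ`. -/
theorem exists_eq_zero_of_forall_face_sign {d : ℕ} {f : (Fin d → ℝ) → (Fin d → ℝ)}
    (hf : Continuous f)
    (hneg : ∀ x ∈ closedBall (0 : Fin d → ℝ) 1, ∀ i, x i = -1 → f x i < 0)
    (hpos : ∀ x ∈ closedBall (0 : Fin d → ℝ) 1, ∀ i, x i = 1 → 0 < f x i) :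
    ∃ x ∈ closedBall (0 : Fin d → ℝ) 1, f x = 0 := by
  let p : (Fin d → ℝ) → (Fin d → ℝ) := fun x i => max (-1) (min 1 (x i))
  have hp : Continuous p := by fun_prop
  have hpK : ∀ x, p x ∈ closedBall (0 : Fin d → ℝ) 1 := fun x => by
    rw [mem_closedBall_zero_iff, pi_norm_le_iff_of_nonneg zero_le_one]
    exact fun i => abs_le.2 ⟨le_max_left _ _, max_le (by norm_num) (min_le_left _ _)⟩
  let χ : (Fin d → ℝ) → ℝ := fun x => max 0 (min 1 (2 - ‖x‖))
  have hχ : Continuous χ := by fun_prop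
  have hχ0 : ∀ x, 0 ≤ χ x := fun x => le_max_left _ _
  have hχ1 : ∀ x, χ x ≤ 1 := fun x => max_le zero_le_one (min_le_left _ _)
  let g : (Fin d → ℝ) → (Fin d → ℝ) := fun x => χ x • (f (p x) - x)
  have hg : Continuous g := hχ.smul ((hf.comp hp).sub continuous_id)
  have hsupp : HasCompactSupport g := by
    refine .intro (isCompact_closedBall (0 : Fin d → ℝ) 2) fun x hx => ?_
    rw [mem_closedBall_zero_iff, not_le] at hx
    have : χ x = 0 := max_eq_left ((min_le_right _ _).trans (by linarith))
    simp [g, this]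
  obtain ⟨x, hx⟩ := surjective_id_add_of_continuous_of_hasCompactSupport hg hsupp 0
  have hxi : ∀ i, (1 - χ x) * x i + χ x * f (p x) i = 0 := fun i => by
    have := congrFun hx i
    simp only [g, Pi.add_apply, Pi.smul_apply, Pi.sub_apply, smul_eq_mul, Pi.zero_apply] at this
    linarith
  have hconv : ∀ {u v : ℝ}, 0 < u → 0 < v → 0 < (1 - χ x) * u + χ x * v := fun {u v} hu hv => by
    rcases (hχ0 x).eq_or_lt with h | h
    · simpa [← h] using hu
    · exact add_pos_of_nonneg_of_pos (mul_nonneg (sub_nonneg.2 (hχ1 x)) hu.le) (mul_pos h hv)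
  have hxabs : ∀ i, -1 ≤ x i ∧ x i ≤ 1 := fun i => by
    constructor
    · by_contra! h
      have hpx : p x i = -1 := max_eq_left ((min_le_right _ _).trans h.le)
      have := hconv (u := -x i) (v := -f (p x) i) (by linarith)
        (by linarith [hneg _ (hpK x) i hpx])
      linarith [hxi i]
    · by_contra! h
      have hpx : p x i = 1 := by
        simp only [p, min_eq_left h.le]
        norm_num
      have := hconv (u := x i) (v := f (p x) i) (by linarith) (hpos _ (hpK x) i hpx)
      linarith [hxi i]
  have hxp : p x = x := funext fun i => by
    simp only [p, min_eq_right (hxabs i).2, max_eq_right (hxabs i).1]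
  have hxK : x ∈ closedBall (0 : Fin d → ℝ) 1 := hxp ▸ hpK x
  refine ⟨x, hxK, funext fun i => ?_⟩
  have hχx : χ x = 1 := by
    have : ‖x‖ ≤ 1 := mem_closedBall_zero_iff.1 hxK
    simp only [χ]
    rw [min_eq_left (by linarith), max_eq_right zero_le_one]
  simpa [hχx, hxp] using hxi i

/-- **Besicovitch-type inequality.** If a continuous map of the cube `[-1, 1]ᵈ` into a metric
space sends opposite faces to disjoint sets, then the space has positive `d`-dimensional
Hausdorff measure. -/
theorem hausdorffMeasure_univ_pos_of_disjoint_opposite_faces {d : ℕ} {X : Type*} [MetricSpace X]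
    [MeasurableSpace X] [BorelSpace X] {Φ : (Fin d → ℝ) → X} (hΦ : Continuous Φ)
    (hdisj : ∀ i, ∀ x ∈ closedBall (0 : Fin d → ℝ) 1, ∀ y ∈ closedBall (0 : Fin d → ℝ) 1,
      x i = -1 → y i = 1 → Φ x ≠ Φ y) :
    0 < μH[(d : ℝ)] (Set.univ : Set X) := by
  let K := closedBall (0 : Fin d → ℝ) 1
  have hK : IsCompact K := isCompact_closedBall _ _
  let S : ℝ → Fin d → Set X := fun s i => Φ '' (K ∩ {x | x i = s})
  have hS : ∀ s i, IsCompact (S s i) := fun s i =>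
    (hK.inter_right (isClosed_eq (continuous_apply i) continuous_const)).image hΦ
  have hSne : ∀ s i, |s| = 1 → (S s i).Nonempty := fun s i hs => by
    refine ⟨_, fun _ => s, ⟨?_, rfl⟩, rfl⟩
    rw [mem_closedBall_zero_iff, pi_norm_le_iff_of_nonneg zero_le_one]
    exact fun _ => hs.le
  let F : X → (Fin d → ℝ) := fun x i => infDist x (S (-1) i)
  have hF : LipschitzWith 1 F :=
    LipschitzWith.of_dist_le_mul fun x y => by
      simpa using (dist_pi_le_iff dist_nonneg).2 fun i =>
        by simpa using (lipschitz_infDist_pt (S (-1) i)).dist_le_mul x y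
  have hgap : ∀ i, ∃ r : ℝ, 0 < r ∧ ∀ x ∈ S 1 i, r ≤ F x i := fun i => by
    obtain ⟨x₀, hx₀, hmin⟩ := (hS 1 i).exists_isMinOn (hSne 1 i (by simp))
      (continuous_infDist_pt (S (-1) i)).continuousOn
    refine ⟨infDist x₀ (S (-1) i), ?_, fun x hx => hmin hx⟩
    refine ((hS (-1) i).isClosed.notMem_iff_infDist_pos (hSne (-1) i (by simp))).1 ?_
    rintro ⟨u, hu, huv⟩
    obtain ⟨v, hv, rfl⟩ := hx₀
    exact hdisj i u hu.1 v hv.1 hu.2 hv.2 huv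
  choose r hr hrF using hgap
  have hsub : (Set.univ.pi fun i => Set.Ioo 0 (r i)) ⊆ F '' Set.univ := fun q hq => by
    have hq' : ∀ i, q i ∈ Set.Ioo 0 (r i) := fun i => hq i (Set.mem_univ i)
    obtain ⟨x, -, hx⟩ := exists_eq_zero_of_forall_face_sign
      (f := fun x => F (Φ x) - q) ((hF.continuous.comp hΦ).sub continuous_const)
      (fun x hx i hxi => by
        have : F (Φ x) i = 0 := infDist_zero_of_mem ⟨x, ⟨hx, hxi⟩, rfl⟩
        simpa [this] using (hq' i).1)
      (fun x hx i hxi => by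
        have := hrF i (Φ x) ⟨x, ⟨hx, hxi⟩, rfl⟩
        simpa using (hq' i).2.trans_le this)
    exact ⟨Φ x, Set.mem_univ _, sub_eq_zero.1 hx⟩
  have hvol : 0 < μH[(d : ℝ)] (Set.univ.pi fun i => Set.Ioo 0 (r i)) := by
    have hpi := hausdorffMeasure_pi_real (ι := Fin d)
    rw [Fintype.card_fin] at hpi
    rw [hpi]
    exact (isOpen_set_pi Set.finite_univ fun i _ => isOpen_Ioo).measure_pos _
      (Set.univ_pi_nonempty_iff.2 fun i => Set.nonempty_Ioo.2 (hr i))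
  refine hvol.trans_le ((measure_mono hsub).trans ?_)
  simpa using hF.hausdorffMeasure_image_le d.cast_nonneg Set.univ

/-- For a point `x₀` of the open unit ball, points can be pulled continuously along rays from `x₀`
into the closed unit ball, in such a way that all points far away land on the unit sphere. -/
theorem exists_radial_retraction_unit_ball {E : Type*} [NormedAddCommGroup E] [NormedSpace ℝ E]
    {x₀ : E} (hx₀ : ‖x₀‖ < 1) :
    ∃ c : E → ℝ, Continuous c ∧ (∀ y, 0 < c y) ∧ (∀ y, ‖x₀ + c y • y‖ ≤ 1) ∧
      ∀ y, 2 < ‖y‖ → ‖x₀ + c y • y‖ = 1 := by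
  have hconv : Convex ℝ (ball (-x₀) 1) := convex_ball _ _
  have hnhds : ball (-x₀) 1 ∈ nhds (0 : E) := isOpen_ball.mem_nhds (by simpa using hx₀)
  let N : E → ℝ := gauge (ball (-x₀) 1)
  have hN : Continuous N := continuous_gauge hconv hnhds
  have hmem : ∀ y, N y ≤ 1 → ‖x₀ + y‖ ≤ 1 := fun y hy => by
    have := closure_ball_subset_closedBall ((gauge_le_one_iff_mem_closure hconv hnhds).1 hy)
    rwa [mem_closedBall_iff_norm, sub_neg_eq_add, add_comm] at this
  have hsphere : ∀ y, 1 < N y → ‖x₀ + (N y)⁻¹ • y‖ = 1 := fun y hy => by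
    have hone : gauge (ball (-x₀) 1) ((N y)⁻¹ • y) = 1 := by
      rw [gauge_smul_of_nonneg (inv_nonneg.2 (zero_le_one.trans hy.le)), smul_eq_mul]
      exact inv_mul_cancel₀ (zero_lt_one.trans hy).ne'
    have := frontier_ball_subset_sphere ((gauge_eq_one_iff_mem_frontier hconv hnhds).1 hone)
    rwa [mem_sphere_iff_norm, sub_neg_eq_add, add_comm] at this
  have hmax : ∀ y, 0 < max 1 (N y) := fun y => zero_lt_one.trans_le (le_max_left _ _)
  refine ⟨fun y => (max 1 (N y))⁻¹, (continuous_const.max hN).inv₀ fun y => (hmax y).ne',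
    fun y => inv_pos.2 (hmax y), fun y => ?_, fun y hy => ?_⟩
  · rcases le_or_gt (N y) 1 with h | h
    · simpa [max_eq_left h] using hmem y h
    · simpa only [max_eq_right h.le] using (hsphere y h).le
  · have h : 1 < N y := by
      by_contra! h
      have : ‖y‖ ≤ ‖x₀ + y‖ + ‖x₀‖ := by simpa using norm_sub_le (x₀ + y) x₀
      linarith [hmem y h]
    simpa only [max_eq_right h.le] using hsphere y h

/-- In a contractible space of vanishing `(n+1)`-dimensional Hausdorff measure, an injective
`n`-disk is contained in every `n`-disk with the same boundary values. -/
theorem range_subset_range_of_eq_on_sphere {n : ℕ} {X : Type*} [MetricSpace X]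
    [MeasurableSpace X] [BorelSpace X] [ContractibleSpace X]
    (hX : μH[(n : ℝ) + 1] (Set.univ : Set X) = 0)
    (Δ₁ Δ₂ : C((closedBall (0 : EuclideanSpace ℝ (Fin n)) 1 : Set _), X))
    (h₁ : Function.Injective Δ₁)
    (hbd : ∀ x : (closedBall (0 : EuclideanSpace ℝ (Fin n)) 1 : Set _),
      ‖(x : EuclideanSpace ℝ (Fin n))‖ = 1 → Δ₁ x = Δ₂ x) :
    Set.range Δ₁ ⊆ Set.range Δ₂ := by
  rintro _ ⟨x₀, rfl⟩
  by_contra hp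
  have hx₀ : ‖(x₀ : EuclideanSpace ℝ (Fin n))‖ < 1 :=
    (mem_closedBall_zero_iff.1 x₀.2).lt_of_ne fun h => hp ⟨x₀, (hbd x₀ h).symm⟩
  obtain ⟨c, hc, hcpos, hcle, hcsphere⟩ := exists_radial_retraction_unit_ball hx₀
  let r : EuclideanSpace ℝ (Fin n) → (closedBall (0 : EuclideanSpace ℝ (Fin n)) 1 : Set _) :=
    fun y => ⟨x₀ + c y • y, mem_closedBall_zero_iff.2 (hcle y)⟩
  have hr : Continuous r := by fun_prop
  have hr0 : r 0 = x₀ := Subtype.ext (by simp [r])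
  let w : (Fin (n + 1) → ℝ) → EuclideanSpace ℝ (Fin n) :=
    fun z => WithLp.toLp 2 fun i => 3 * z i.succ
  have hw : Continuous w := by fun_prop
  have hagree : ∀ z (i : Fin n), 2 / 3 < |z i.succ| → Δ₁ (r (w z)) = Δ₂ (r (w z)) :=
    fun z i hz => by
      refine hbd _ (hcsphere _ (lt_of_lt_of_le ?_ (PiLp.norm_apply_le (w z) i)))
      rw [Real.norm_eq_abs, show w z i = 3 * z i.succ from rfl, abs_mul, abs_of_pos three_pos]
      linarith
  obtain ⟨ε, hε, hεK⟩ : ∃ ε : ℝ, 0 < ε ∧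
      ∀ z ∈ closedBall (0 : Fin (n + 1) → ℝ) 1, Δ₁ (r (ε • w z)) ∉ Set.range Δ₂ := by
    have hopen : IsOpen (Set.range Δ₂)ᶜ := (isCompact_range Δ₂.continuous).isClosed.isOpen_compl
    have hev : ∀ᶠ ε : ℝ in nhds 0, ∀ z ∈ closedBall (0 : Fin (n + 1) → ℝ) 1,
        Δ₁ (r (ε • w z)) ∉ Set.range Δ₂ := by
      refine (isCompact_closedBall _ _).eventually_forall_of_forall_eventually fun z _ => ?_
      have hcont : Continuous fun u : ℝ × (Fin (n + 1) → ℝ) => Δ₁ (r (u.1 • w u.2)) := by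
        fun_prop
      exact hcont.continuousAt.eventually (hopen.mem_nhds (by simpa [hr0] using hp))
    obtain ⟨ε, hε, hpos⟩ := ((hev.filter_mono nhdsWithin_le_nhds).and
      (self_mem_nhdsWithin (s := Set.Ioi (0 : ℝ)))).exists
    exact ⟨ε, hpos, hε⟩
  obtain ⟨y₀, ⟨H⟩⟩ := id_nullhomotopic X
  let s : (Fin (n + 1) → ℝ) → unitInterval :=
    fun z => Set.projIcc 0 1 zero_le_one (3 * (1 - ‖z‖))
  have hs : Continuous s := continuous_projIcc.comp (by fun_prop)
  let Φ : (Fin (n + 1) → ℝ) → X := fun z =>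
    if z 0 ≤ 0 then H (s z, Δ₂ (r (w z)))
    else H (s z, Δ₁ (r ((1 - z 0 + ε * z 0) • w z)))
  have hΦ : Continuous Φ := by
    refine Continuous.if_le (by fun_prop) (by fun_prop) (by fun_prop) continuous_const
      fun z hz => ?_
    rw [hz]
    by_cases h : ‖z‖ ≤ 2 / 3
    · have hs1 : s z = 1 := Set.projIcc_of_right_le _ (by linarith)
      simp [hs1]
    · obtain ⟨i, hi⟩ : ∃ i : Fin n, 2 / 3 < |z i.succ| := by
        by_contra! hall
        refine h ((pi_norm_le_iff_of_nonneg (by norm_num)).2 fun j => ?_)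
        refine Fin.cases ?_ (fun i => hall i) j
        rw [hz, norm_zero]
        norm_num
      simp [hagree z i hi]
  have hboundary : ∀ z ∈ closedBall (0 : Fin (n + 1) → ℝ) 1, ∀ j, |z j| = 1 →
      Φ z = if z 0 ≤ 0 then Δ₂ (r (w z)) else Δ₁ (r ((1 - z 0 + ε * z 0) • w z)) :=
    fun z _ j hj => by
      have hz1 : 1 ≤ ‖z‖ := hj ▸ norm_le_pi_norm z j
      have hs0 : s z = 0 := Set.projIcc_of_le_left _ (by linarith)
      simp [Φ, hs0]
  have hside : ∀ z ∈ closedBall (0 : Fin (n + 1) → ℝ) 1, ∀ i : Fin n, |z i.succ| = 1 →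
      ∃ m : ℝ, 0 < m ∧ Φ z = Δ₁ (r (m • w z)) := fun z hz i hi => by
    rw [hboundary z hz _ hi]
    split_ifs with h0
    · exact ⟨1, one_pos, by rw [one_smul, hagree z i (by rw [hi]; norm_num)]⟩
    · have h1 : z 0 ≤ 1 :=
        (le_abs_self _).trans ((norm_le_pi_norm z 0).trans (mem_closedBall_zero_iff.1 hz))
      exact ⟨_, by nlinarith [mul_pos hε (not_le.1 h0)], rfl⟩
  refine (hausdorffMeasure_univ_pos_of_disjoint_opposite_faces hΦ ?_).ne' (by simpa using hX)
  refine Fin.cases ?_ fun i => ?_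
  · intro x hx y hy hx0 hy0 hxy
    rw [hboundary x hx 0 (by simp [hx0]), hboundary y hy 0 (by simp [hy0]),
      if_pos (by rw [hx0]; norm_num), if_neg (by rw [hy0]; norm_num), hy0] at hxy
    exact hεK y hy ⟨_, by simpa using hxy⟩
  · intro x hx y hy hxi hyi hxy
    obtain ⟨a, ha, hxa⟩ := hside x hx i (by simp [hxi])
    obtain ⟨b, hb, hyb⟩ := hside y hy i (by simp [hyi])
    rw [hxa, hyb] at hxy
    have hcoord := congrArg (fun v : EuclideanSpace ℝ (Fin n) => v i)
      (congrArg Subtype.val (h₁ hxy))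
    simp only [r, w, PiLp.add_apply, PiLp.smul_apply, smul_eq_mul, hxi, hyi,
      add_right_inj] at hcoord
    have h1 := mul_pos (hcpos (a • w x)) ha
    have h2 := mul_pos (hcpos (b • w y)) hb
    simp only [w] at h1 h2
    nlinarith

/-- **Disks with common boundary coincide.** Suppose `Δ₁, Δ₂` are two embedded `n`-disks in a
metric space `X` which agree on the boundary sphere `∂Dⁿ`. If `X` is contractible and its
`(n+1)`-dimensional Hausdorff measure vanishes, then `Δ₁ = Δ₂` as subsets of `X`. -/
theorem embedded_disks_with_same_boundary_eq
    (n : ℕ) {X : Type*} [MetricSpace X] [MeasurableSpace X] [BorelSpace X]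
    [ContractibleSpace X]
    (hX : μH[(n : ℝ) + 1] (Set.univ : Set X) = 0)
    (Δ₁ Δ₂ : C((Metric.closedBall (0 : EuclideanSpace ℝ (Fin n)) 1 : Set _), X))
    (h₁ : Topology.IsEmbedding Δ₁) (h₂ : Topology.IsEmbedding Δ₂)
    (hbd : ∀ x : (Metric.closedBall (0 : EuclideanSpace ℝ (Fin n)) 1 : Set _),
      ‖(x : EuclideanSpace ℝ (Fin n))‖ = 1 → Δ₁ x = Δ₂ x) :
    Set.range Δ₁ = Set.range Δ₂ := by
  exact (range_subset_range_of_eq_on_sphere hX Δ₁ Δ₂ h₁.injective hbd).antisymm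
    (range_subset_range_of_eq_on_sphere hX Δ₂ Δ₁ h₂.injective fun x hx => (hbd x hx).symm)
end
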